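/- arXiv:1109.5880 — 2 statements merged into one kernel-verified Lean document; each statement's English description precedes it below -/
import Mathlib

section
/- Let {X_t}_{t≥1} be identically distributed, pairwise asymptotically independent positive random variables and {Θ_t}_{t≥1} positive random variables satisfying the RW moment conditions for some α>0, with the sequence {Θ_t} independent of the sequence {X_t}. If the function x ↦ Σ_{t=1}^∞ P[Θ_t X_t > x] is regularly varying of index −α, then Σ_{t=1}^∞ P[Θ_t X_t > x] ~ P[X_(∞) > x] as x→∞, where X_(∞) = Σ_{t=1}^∞ Θ_t X_t, and X_(∞) is finite almost surely. -/
open MeasureTheory ProbabilityTheory Filter Topology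
open scoped ENNReal

noncomputable section

/-- A function, positive on `(0,∞)`, is regularly varying at infinity with index `ρ`:
for every `t > 0`, `f(tx)/f(x) → t^ρ` as `x → ∞`. -/
def RegVarying (f : ℝ → ℝ) (ρ : ℝ) : Prop :=
  (∀ x : ℝ, 0 < x → 0 < f x) ∧
    ∀ t : ℝ, 0 < t → Tendsto (fun x : ℝ => f (t * x) / f x) atTop (nhds (t ^ ρ))

variable {Ω : Type*} [MeasurableSpace Ω]

/-- The (possibly infinite) moment `E[Θ^r]`. -/
def momE (P : Measure Ω) (Θ : Ω → ℝ) (r : ℝ) : ℝ≥0∞ :=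
  ∫⁻ ω, ENNReal.ofReal (Θ ω ^ r) ∂P

/-- The RW moment conditions for the sequence `{Θ_t}` and the index `α`:
if `0 < α < 1`, then `Σ_t E[Θ_t^{α+ε} + Θ_t^{α-ε}] < ∞` for some `ε ∈ (0,α)`;
if `α ≥ 1`, then `Σ_t (E[Θ_t^{α+ε} + Θ_t^{α-ε}])^{1/(α+ε)} < ∞` for some `ε ∈ (0,α)`. -/
def RWConditions (P : Measure Ω) (Θ : ℕ → Ω → ℝ) (α : ℝ) : Prop :=
  ∃ ε : ℝ, 0 < ε ∧ ε < α ∧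
    ((α < 1 ∧ (∑' t : ℕ, (momE P (Θ t) (α + ε) + momE P (Θ t) (α - ε))) ≠ ⊤) ∨
      (1 ≤ α ∧
        (∑' t : ℕ, (momE P (Θ t) (α + ε) + momE P (Θ t) (α - ε)) ^ (1 / (α + ε))) ≠ ⊤))

/-- The tail `P[Z > x]` of a random variable, as a real number. -/
def tailP (P : Measure Ω) (Z : Ω → ℝ) (x : ℝ) : ℝ := (P {ω | x < Z ω}).toReal

/-- `X` and `Y` are asymptotically independent:
`P[X > x, Y > x] / P[X > x] → 0` and `P[X > x, Y > x] / P[Y > x] → 0` as `x → ∞`. -/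
def AsympIndep (P : Measure Ω) (X Y : Ω → ℝ) : Prop :=
  Tendsto (fun x : ℝ =>
      (P {ω | x < X ω ∧ x < Y ω}).toReal / (P {ω | x < X ω}).toReal) atTop (nhds 0) ∧
    Tendsto (fun x : ℝ =>
      (P {ω | x < X ω ∧ x < Y ω}).toReal / (P {ω | x < Y ω}).toReal) atTop (nhds 0)

/- The principle of a single big jump. Write `H x = ∑ P[Θ t X t > x]`. Independence and
Karamata–Potter estimates for `H`, which dominates the tails of the `X t` up to a constant, bound
the truncated moments: `E[min (Θ t X t / x) 1 ^ p] ≤ C H(x) E[Θ t ^ p + Θ t ^ q]` for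
`q < α < p` close to `α` and large `x`. By Minkowski's inequality in `L^p` (subadditivity of
`z ↦ z ^ p` when `p < 1`) and the moment conditions, the remainders of the series after `n` terms
have tails at most `ε_n H(x)` with `ε_n → 0`. Two of the first `n` terms exceed a multiple of `x`
with probability `o(H(x))`, by asymptotic independence of the `X t` and dominated convergence in
the `Θ t`. So the sum exceeds `x` essentially only when a single term exceeds nearly `x`. -/

@[elab_as_elim]
lemma dyadic_induction {x₀ : ℝ} (hx₀ : 0 < x₀) {p : ℝ → Prop}
    (base : ∀ x, x₀ ≤ x → x ≤ 2 * x₀ → p x) (step : ∀ x, x₀ ≤ x → p x → p (2 * x)) {x : ℝ}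
    (hx : x₀ ≤ x) : p x := by
  obtain ⟨n, hn, hn'⟩ := exists_nat_pow_near ((one_le_div hx₀).2 hx) one_lt_two
  rw [le_div_iff₀ hx₀] at hn
  rw [div_lt_iff₀ hx₀, pow_succ, mul_assoc] at hn'
  suffices ∀ k y, x₀ ≤ y → p y → p (2 ^ k * y) by
    have hlow : x₀ ≤ x / 2 ^ n := (le_div_iff₀' (by positivity)).2 hn
    have hup : x / 2 ^ n ≤ 2 * x₀ := (div_le_iff₀' (by positivity)).2 hn'.le
    have := this n _ hlow (base _ hlow hup)
    rwa [mul_div_cancel₀ _ (by positivity)] at this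
  intro k
  induction k with
  | zero => simp
  | succ k ih =>
    intro y hy hpy
    rw [pow_succ, mul_assoc]
    exact ih _ (by linarith) (step y hy hpy)

namespace RegVarying

variable {h : ℝ → ℝ} {α ρ p q : ℝ}

lemma eventually_comp_mul_le (hh : RegVarying h ρ) {t c : ℝ} (ht : 0 < t) (hc : t ^ ρ < c) :
    ∀ᶠ x in atTop, h (t * x) ≤ c * h x := by
  filter_upwards [(hh.2 t ht).eventually_lt_const hc, eventually_gt_atTop 0] with x hx hx0
  exact ((div_lt_iff₀ (hh.1 x hx0)).1 hx).le

lemma eventually_le_comp_mul (hh : RegVarying h ρ) {t c : ℝ} (ht : 0 < t) (hc : c < t ^ ρ) :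
    ∀ᶠ x in atTop, c * h x ≤ h (t * x) := by
  filter_upwards [(hh.2 t ht).eventually_const_lt hc, eventually_gt_atTop 0] with x hx hx0
  exact ((lt_div_iff₀ (hh.1 x hx0)).1 hx).le

lemma eventually_forall_ge_rpow_mul_le (hh : RegVarying h (-α)) (hanti : AntitoneOn h (Set.Ioi 0))
    (hq : 0 ≤ q) (hqα : q < α) :
    ∀ᶠ x in atTop, ∀ y ≥ x, y ^ q * h y ≤ 2 ^ q * (x ^ q * h x) := by
  have hdouble : ∀ᶠ x in atTop, h (2 * x) ≤ 2 ^ (-q) * h x :=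
    hh.eventually_comp_mul_le two_pos (Real.rpow_lt_rpow_of_exponent_lt one_lt_two (by linarith))
  filter_upwards [eventually_forall_ge_atTop.2 hdouble, eventually_gt_atTop 0]
    with x hdouble hx y hy
  refine dyadic_induction hx (fun y hxy hyx => ?_) (fun y hxy ih => ?_) hy
  · have hy : 0 < y := hx.trans_le hxy
    calc y ^ q * h y ≤ (2 * x) ^ q * h x := by
          gcongr
          exacts [(hh.1 y hy).le, hanti hx hy hxy]
      _ = 2 ^ q * (x ^ q * h x) := by rw [Real.mul_rpow two_pos.le hx.le, mul_assoc]
  · have hy : 0 < y := hx.trans_le hxy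
    calc (2 * y) ^ q * h (2 * y) ≤ (2 * y) ^ q * (2 ^ (-q) * h y) := by
          gcongr
          exact hdouble y hxy
      _ = y ^ q * h y := by
          rw [Real.mul_rpow two_pos.le hy.le, Real.rpow_neg two_pos.le]
          field_simp
      _ ≤ _ := ih

lemma eventually_forall_ge_rpow_mul_ge (hh : RegVarying h (-α)) (hanti : AntitoneOn h (Set.Ioi 0))
    (hp : 0 ≤ p) (hαp : α < p) :
    ∀ᶠ x in atTop, ∀ y ≥ x, x ^ p * h x ≤ 2 ^ p * (y ^ p * h y) := by
  have hdouble : ∀ᶠ x in atTop, 2 ^ (-p) * h x ≤ h (2 * x) :=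
    hh.eventually_le_comp_mul two_pos (Real.rpow_lt_rpow_of_exponent_lt one_lt_two (by linarith))
  filter_upwards [eventually_forall_ge_atTop.2 hdouble, eventually_gt_atTop 0]
    with x hdouble hx y hy
  have hscale : ∀ z, x ≤ z → z ^ p * h z ≤ (2 * z) ^ p * h (2 * z) := fun z hz => by
    have hz0 : 0 < z := hx.trans_le hz
    calc z ^ p * h z = (2 * z) ^ p * (2 ^ (-p) * h z) := by
          rw [Real.mul_rpow two_pos.le hz0.le, Real.rpow_neg two_pos.le]
          field_simp
      _ ≤ _ := by
          gcongr
          exact hdouble z hz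
  refine dyadic_induction hx (fun y hxy hyx => ?_) (fun y hxy ih => ?_) hy
  · have hy : 0 < y := hx.trans_le hxy
    calc x ^ p * h x ≤ (2 * x) ^ p * h (2 * x) := hscale x le_rfl
      _ ≤ (2 * y) ^ p * h y := by
          gcongr
          exacts [(hh.1 _ (by positivity)).le, hanti hy (Set.mem_Ioi.2 (by positivity)) hyx]
      _ = 2 ^ p * (y ^ p * h y) := by rw [Real.mul_rpow two_pos.le hy.le, mul_assoc]
  · exact ih.trans (mul_le_mul_of_nonneg_left (hscale y hxy) (by positivity))

theorem eventually_potter_bound (hh : RegVarying h (-α)) (hanti : AntitoneOn h (Set.Ioi 0))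
    (hq : 0 ≤ q) (hqα : q < α) (hαp : α < p) :
    ∀ᶠ x₀ in atTop, ∀ x ≥ x₀, ∀ y ≥ x₀, h y ≤ 2 ^ p * h x * ((x / y) ^ p + (x / y) ^ q) := by
  have hp : 0 ≤ p := by linarith
  have hlow := eventually_forall_ge_atTop.2 (hh.eventually_forall_ge_rpow_mul_ge hanti hp hαp)
  have hup := eventually_forall_ge_atTop.2 (hh.eventually_forall_ge_rpow_mul_le hanti hq hqα)
  filter_upwards [hlow, hup, eventually_gt_atTop 0] with x₀ hlow hup hx₀ x hx y hy
  have hx0 : 0 < x := hx₀.trans_le hx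
  have hy0 : 0 < y := hx₀.trans_le hy
  have hhx : 0 < h x := hh.1 x hx0
  rcases le_total y x with hyx | hxy
  · calc h y = (y ^ p * h y) / y ^ p := by field_simp
      _ ≤ 2 ^ p * (x ^ p * h x) / y ^ p := by gcongr ?_ / _; exact hlow y hy x hyx
      _ = 2 ^ p * h x * (x / y) ^ p := by rw [Real.div_rpow hx0.le hy0.le]; ring
      _ ≤ _ := by gcongr; exact le_add_of_nonneg_right (by positivity)
  · calc h y = (y ^ q * h y) / y ^ q := by field_simp
      _ ≤ 2 ^ q * (x ^ q * h x) / y ^ q := by gcongr ?_ / _; exact hup x hx y hxy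
      _ = 2 ^ q * h x * (x / y) ^ q := by rw [Real.div_rpow hx0.le hy0.le]; ring
      _ ≤ _ := by
          gcongr
          exacts [one_le_two, by linarith, le_add_of_nonneg_left (by positivity)]

lemma exists_eventually_one_le_rpow_mul (hh : RegVarying h (-α))
    (hanti : AntitoneOn h (Set.Ioi 0)) (hp : 0 ≤ p) (hαp : α < p) :
    ∃ K > 0, ∀ᶠ x in atTop, 1 ≤ K * (x ^ p * h x) := by
  obtain ⟨x₀, hx₀, hlow⟩ :=
    ((eventually_gt_atTop 0).and (hh.eventually_forall_ge_rpow_mul_ge hanti hp hαp)).exists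
  have hpos : 0 < x₀ ^ p * h x₀ := mul_pos (Real.rpow_pos_of_pos hx₀ p) (hh.1 x₀ hx₀)
  refine ⟨2 ^ p / (x₀ ^ p * h x₀), by positivity, ?_⟩
  filter_upwards [eventually_ge_atTop x₀] with x hx
  rw [div_mul_eq_mul_div, one_le_div hpos]
  exact hlow x hx

/- Doubling turns a bound `B h x` into `(2 ^ (-p) B + A) h x`; this is again at most `B h (2 x)`
for large `B`, because `h (2 x) / h x` tends to `2 ^ (-α) > 2 ^ (-p)`. -/
lemma eventually_exists_le_of_doubling (hh : RegVarying h (-α))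
    (hanti : AntitoneOn h (Set.Ioi 0)) (hαp : α < p) {A : ℝ} (hA : 0 ≤ A) :
    ∀ᶠ x₀ in atTop, ∃ B, 0 ≤ B ∧ ∀ T : ℝ → ℝ≥0∞, (∀ x, T x ≤ 1) →
      (∀ x ≥ x₀, T (2 * x) ≤ ENNReal.ofReal (2 ^ (-p)) * T x + ENNReal.ofReal (A * h x)) →
      ∀ x ≥ x₀, T x ≤ ENNReal.ofReal (B * h x) := by
  obtain ⟨κ, hpκ, hκα⟩ := exists_between
    (Real.rpow_lt_rpow_of_exponent_lt one_lt_two (neg_lt_neg hαp))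
  filter_upwards [eventually_forall_ge_atTop.2 (hh.eventually_le_comp_mul two_pos hκα),
    eventually_gt_atTop 0] with x₀ hκ hx₀
  have hpos : ∀ x ≥ x₀, 0 < h x := fun x hx => hh.1 x (hx₀.trans_le hx)
  have hpos₂ : 0 < h (2 * x₀) := hpos _ (by linarith)
  obtain ⟨B, hB₁, hB₂⟩ : ∃ B, 1 / h (2 * x₀) ≤ B ∧ A / (κ - 2 ^ (-p)) ≤ B :=
    ⟨_, le_max_left _ _, le_max_right _ _⟩
  have hB : 0 ≤ B := (one_div_pos.2 hpos₂).le.trans hB₁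
  rw [div_le_iff₀ hpos₂] at hB₁
  rw [div_le_iff₀ (sub_pos.2 hpκ)] at hB₂
  refine ⟨B, hB, fun T hT hdouble x hx =>
    dyadic_induction hx₀ (fun x hx hx₂ => ?_) (fun x hx ih => ?_) hx⟩
  · have hanti₂ : h (2 * x₀) ≤ h x := hanti (hx₀.trans_le hx) (Set.mem_Ioi.2 (by linarith)) hx₂
    rw [← ENNReal.ofReal_one] at hT
    exact (hT x).trans (ENNReal.ofReal_le_ofReal (hB₁.trans (by gcongr)))
  · have hhx := hpos x hx
    calc T (2 * x) ≤ ENNReal.ofReal (2 ^ (-p)) * ENNReal.ofReal (B * h x)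
          + ENNReal.ofReal (A * h x) := (hdouble x hx).trans (by gcongr)
      _ = ENNReal.ofReal ((2 ^ (-p) * B + A) * h x) := by
          rw [← ENNReal.ofReal_mul (by positivity), ← ENNReal.ofReal_add (by positivity)
            (by positivity)]
          ring_nf
      _ ≤ ENNReal.ofReal (B * (κ * h x)) := by
          rw [← mul_assoc]
          gcongr
          linarith
      _ ≤ _ := by gcongr; exact hκ x hx

end RegVarying

/-- The normalised truncated moment `E[min(Y⁺/x, 1) ^ p]`, for `x > 0`; it dominates the tail
`P[Y > x]`, and unlike the tail it can be bounded through Minkowski's inequality for sums. -/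
def truncMoment (P : Measure Ω) (p : ℝ) (Y : Ω → ℝ) (x : ℝ) : ℝ≥0∞ :=
  ∫⁻ ω, ENNReal.ofReal (min (Y ω / x) 1) ^ p ∂P

section TruncMoment

variable {P : Measure Ω} {Y : Ω → ℝ} {p x : ℝ}

lemma truncMoment_le_one [IsProbabilityMeasure P] (hp : 0 ≤ p) : truncMoment P p Y x ≤ 1 :=
  (lintegral_mono fun _ => ENNReal.rpow_le_one
    (ENNReal.ofReal_le_one.2 (min_le_right _ _)) hp).trans_eq (by simp)

lemma measure_lt_le_truncMoment (hY : Measurable Y) (hx : 0 < x) :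
    P {ω | x < Y ω} ≤ truncMoment P p Y x := by
  refine le_trans (measure_mono fun ω (hω : x < Y ω) => ?_)
    ((one_mul _).symm.trans_le (mul_meas_ge_le_lintegral (by fun_prop) 1))
  simp only [Set.mem_ofPred_eq, min_eq_right ((one_le_div hx).2 hω.le), ENNReal.ofReal_one,
    ENNReal.one_rpow, le_refl]

lemma truncMoment_two_mul_le (hY : Measurable Y) (hp : 0 ≤ p) (hx : 0 < x) :
    truncMoment P p Y (2 * x) ≤
      ENNReal.ofReal (2 ^ (-p)) * truncMoment P p Y x + P {ω | x < Y ω} := by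
  have hmeas : MeasurableSet {ω | x < Y ω} := measurableSet_lt measurable_const hY
  rw [truncMoment, truncMoment, ← lintegral_indicator_one hmeas,
    ← lintegral_const_mul _ (by fun_prop), ← lintegral_add_left (by fun_prop)]
  refine lintegral_mono fun ω => ?_
  rcases lt_or_ge x (Y ω) with hxY | hYx
  · rw [Set.indicator_of_mem (show ω ∈ {ω | x < Y ω} from hxY)]
    exact (ENNReal.rpow_le_one (ENNReal.ofReal_le_one.2 (min_le_right _ _)) hp).trans le_add_self
  · refine le_add_right ?_
    rw [Real.rpow_neg two_pos.le, ← Real.inv_rpow two_pos.le,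
      ← ENNReal.ofReal_rpow_of_pos (by positivity), ← ENNReal.mul_rpow_of_nonneg _ _ hp,
      ← ENNReal.ofReal_mul (by positivity), min_eq_left ((div_le_one hx).2 hYx)]
    gcongr
    exact (min_le_left _ _).trans_eq (by field_simp)

theorem RegVarying.exists_truncMoment_le [IsProbabilityMeasure P] {ι : Type*} {Y : ι → Ω → ℝ}
    {h : ℝ → ℝ} {α q A : ℝ} (hY : ∀ i, Measurable (Y i)) (hh : RegVarying h (-α))
    (hanti : AntitoneOn h (Set.Ioi 0)) (hq : 0 ≤ q) (hqα : q < α) (hαp : α < p) (hA : 0 ≤ A)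
    (hdom : ∀ᶠ x in atTop, ∀ i, P {ω | x < Y i ω} ≤ ENNReal.ofReal (A * h x)) :
    ∃ C, 0 ≤ C ∧ ∀ᶠ x in atTop, ∀ i, ∀ θ > 0,
      truncMoment P p (Y i) (x / θ) ≤ ENNReal.ofReal (C * (h x * (θ ^ p + θ ^ q))) := by
  have hp : 0 ≤ p := by linarith
  obtain ⟨K, hK, hone⟩ := hh.exists_eventually_one_le_rpow_mul hanti hp hαp
  obtain ⟨x₀, hdom, ⟨B, hB, hkaramata⟩, hpotter, hx₀⟩ :=
    ((eventually_forall_ge_atTop.2 hdom).and <|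
      (hh.eventually_exists_le_of_doubling hanti hαp hA).and <|
      (hh.eventually_potter_bound hanti hq hqα hαp).and (eventually_gt_atTop 0)).exists
  have hlarge : ∀ i, ∀ y ≥ x₀, truncMoment P p (Y i) y ≤ ENNReal.ofReal (B * h y) := fun i =>
    hkaramata _ (fun _ => truncMoment_le_one hp) fun y hy =>
      (truncMoment_two_mul_le (hY i) hp (hx₀.trans_le hy)).trans (by gcongr; exact hdom y hy i)
  refine ⟨B * 2 ^ p + K * x₀ ^ p, by positivity, ?_⟩
  filter_upwards [hone, eventually_ge_atTop x₀] with x hone hx i θ hθ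
  have hx0 : 0 < x := hx₀.trans_le hx
  have hhx : 0 < h x := hh.1 x hx0
  rcases le_or_gt x₀ (x / θ) with hxθ | hxθ
  · refine (hlarge i _ hxθ).trans (ENNReal.ofReal_le_ofReal ?_)
    calc B * h (x / θ) ≤ B * (2 ^ p * h x * ((x / (x / θ)) ^ p + (x / (x / θ)) ^ q)) := by
          gcongr
          exact hpotter x hx _ hxθ
      _ = B * 2 ^ p * (h x * (θ ^ p + θ ^ q)) := by rw [div_div_cancel₀ hx0.ne']; ring
      _ ≤ _ := by gcongr; exact le_add_of_nonneg_right (by positivity)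
  · refine (truncMoment_le_one hp).trans (ENNReal.one_le_ofReal.2 ?_)
    rw [div_lt_iff₀ hθ] at hxθ
    calc 1 ≤ K * (x ^ p * h x) := hone
      _ ≤ K * ((x₀ * θ) ^ p * h x) := by gcongr
      _ = K * x₀ ^ p * (h x * θ ^ p) := by rw [Real.mul_rpow hx₀.le hθ.le]; ring
      _ ≤ _ := by
          gcongr
          exacts [le_add_of_nonneg_left (by positivity), le_add_of_nonneg_right (by positivity)]

end TruncMoment

section Independence

variable {P : Measure Ω}

lemma exists_pos_measure_lt_ne_zero [NeZero P] {Θ : Ω → ℝ} (hpos : ∀ᵐ ω ∂P, 0 < Θ ω) :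
    ∃ a > 0, P {ω | a < Θ ω} ≠ 0 := by
  by_contra! hzero
  have hle : ∀ᵐ ω ∂P, ∀ n : ℕ, Θ ω ≤ 1 / (n + 1) := ae_all_iff.2 fun n => by
    simpa only [ae_iff, not_le] using hzero _ Nat.one_div_pos_of_nat
  obtain ⟨ω, hω, hωle⟩ := (hpos.and hle).exists
  obtain ⟨n, hn⟩ := exists_nat_one_div_lt hω
  exact (hωle n).not_gt hn

lemma lintegral_const_mul_rpow_add_rpow {Θ : Ω → ℝ} {p q c : ℝ} (hΘ : Measurable Θ)
    (hpos : ∀ᵐ ω ∂P, 0 < Θ ω) (hc : 0 ≤ c) :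
    ∫⁻ ω, ENNReal.ofReal (c * (Θ ω ^ p + Θ ω ^ q)) ∂P =
      ENNReal.ofReal c * (momE P Θ p + momE P Θ q) := by
  rw [momE, momE, ← lintegral_add_left (by fun_prop), ← lintegral_const_mul _ (by fun_prop)]
  refine lintegral_congr_ae (hpos.mono fun ω hω => ?_)
  dsimp only
  rw [ENNReal.ofReal_mul hc, ENNReal.ofReal_add (by positivity) (by positivity)]

variable [IsFiniteMeasure P]

theorem lintegral_comp_indepFun {E F : Type*} [MeasurableSpace E] [MeasurableSpace F]
    {U : Ω → E} {V : Ω → F} (hU : Measurable U) (hV : Measurable V) (hUV : IndepFun U V P)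
    {f : E × F → ℝ≥0∞} (hf : Measurable f) :
    ∫⁻ ω, f (U ω, V ω) ∂P = ∫⁻ ω, ∫⁻ ω', f (U ω, V ω') ∂P ∂P := by
  rw [← lintegral_map hf (hU.prodMk hV),
    (indepFun_iff_map_prod_eq_prod_map_map hU.aemeasurable hV.aemeasurable).1 hUV,
    lintegral_prod _ hf.aemeasurable, lintegral_map hf.lintegral_prod_right' hU]
  exact lintegral_congr fun ω => lintegral_map (hf.comp measurable_prodMk_left) hV

theorem measure_setOf_mem_indepFun {E F : Type*} [MeasurableSpace E] [MeasurableSpace F]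
    {U : Ω → E} {V : Ω → F} (hU : Measurable U) (hV : Measurable V) (hUV : IndepFun U V P)
    {S : Set (E × F)} (hS : MeasurableSet S) :
    P {ω | (U ω, V ω) ∈ S} = ∫⁻ ω, P {ω' | (U ω, V ω') ∈ S} ∂P := by
  have hindicator : ∀ W : Ω → E × F, Measurable W →
      ∫⁻ ω, S.indicator 1 (W ω) ∂P = P {ω | W ω ∈ S} := fun W hW => lintegral_indicator_one (hW hS)
  rw [← hindicator _ (hU.prodMk hV),
    lintegral_comp_indepFun hU hV hUV (measurable_one.indicator hS)]
  exact lintegral_congr fun ω => hindicator _ (by fun_prop)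

variable {X Θ : Ω → ℝ} {p q c x : ℝ} {F : ℝ≥0∞}

lemma truncMoment_mul_le (hΘ : Measurable Θ) (hX : Measurable X) (hΘX : IndepFun Θ X P)
    (hpos : ∀ᵐ ω ∂P, 0 < Θ ω) (hc : 0 ≤ c)
    (hX_le : ∀ θ > 0, truncMoment P p X (x / θ) ≤ ENNReal.ofReal (c * (θ ^ p + θ ^ q)) * F) :
    truncMoment P p (fun ω => Θ ω * X ω) x ≤
      ENNReal.ofReal c * (momE P Θ p + momE P Θ q) * F := by
  have hscale : ∀ θ, ∫⁻ ω, ENNReal.ofReal (min (θ * X ω / x) 1) ^ p ∂P =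
      truncMoment P p X (x / θ) := fun θ => by
    simp only [truncMoment, div_div_eq_mul_div, mul_comm]
  calc truncMoment P p (fun ω => Θ ω * X ω) x
      = ∫⁻ ω, truncMoment P p X (x / Θ ω) ∂P := by
        simp only [← hscale]
        exact lintegral_comp_indepFun hΘ hX hΘX
          (f := fun z : ℝ × ℝ => ENNReal.ofReal (min (z.1 * z.2 / x) 1) ^ p) (by fun_prop)
    _ ≤ ∫⁻ ω, ENNReal.ofReal (c * (Θ ω ^ p + Θ ω ^ q)) * F ∂P :=
        lintegral_mono_ae (hpos.mono fun ω hω => hX_le _ hω)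
    _ = _ := by
        rw [lintegral_mul_const _ (by fun_prop), lintegral_const_mul_rpow_add_rpow hΘ hpos hc]

lemma exists_measure_lt_le_measure_mul [NeZero P] (hΘX : IndepFun Θ X P)
    (hpos : ∀ᵐ ω ∂P, 0 < Θ ω) :
    ∃ a > 0, ∃ c : ℝ≥0∞, c ≠ ⊤ ∧
      ∀ x ≥ 0, P {ω | x < X ω} ≤ c * P {ω | a * x < Θ ω * X ω} := by
  obtain ⟨a, ha, hPa⟩ := exists_pos_measure_lt_ne_zero hpos
  refine ⟨a, ha, (P {ω | a < Θ ω})⁻¹, ENNReal.inv_ne_top.2 hPa, fun x hx => ?_⟩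
  rw [← ENNReal.div_eq_inv_mul, ENNReal.le_div_iff_mul_le (.inl hPa) (.inl (measure_ne_top _ _)),
    mul_comm]
  have hprod : P {ω | a < Θ ω} * P {ω | x < X ω} = P ({ω | a < Θ ω} ∩ {ω | x < X ω}) :=
    (hΘX.measure_inter_preimage_eq_mul _ _ measurableSet_Ioi measurableSet_Ioi).symm
  rw [hprod]
  exact measure_mono fun ω ⟨hΘ, hX⟩ => mul_lt_mul'' hΘ hX ha.le hx

end Independence

lemma rpow_tsum_le_tsum_rpow {ι : Type*} {p : ℝ} (hp : 0 < p) (hp1 : p ≤ 1) (f : ι → ℝ≥0∞) :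
    (∑' i, f i) ^ p ≤ ∑' i, f i ^ p := by
  have hlim : Tendsto (fun s : Finset ι => (∑ i ∈ s, f i) ^ p) atTop (𝓝 ((∑' i, f i) ^ p)) :=
    (ENNReal.continuous_rpow_const.tendsto _).comp ENNReal.summable.hasSum
  refine le_of_tendsto' hlim fun s => le_trans ?_ (ENNReal.sum_le_tsum s)
  exact Finset.le_sum_of_subadditive (· ^ p) (ENNReal.zero_rpow_of_pos hp).le
    (fun a b => ENNReal.rpow_add_le_add_rpow a b hp.le hp1) s f

section Minkowski

variable {P : Measure Ω} {p : ℝ}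

lemma lintegral_sum_rpow_le {Z : ℕ → Ω → ℝ≥0∞} (hp : 1 ≤ p) (hZ : ∀ t, Measurable (Z t)) (n : ℕ) :
    (∫⁻ ω, (∑ t ∈ Finset.range n, Z t ω) ^ p ∂P) ^ (1 / p) ≤
      ∑ t ∈ Finset.range n, (∫⁻ ω, Z t ω ^ p ∂P) ^ (1 / p) := by
  induction n with
  | zero =>
    have hp0 : 0 < p := by linarith
    simp [hp0]
  | succ n ih =>
    simp_rw [Finset.sum_range_succ]
    exact (ENNReal.lintegral_Lp_add_le (f := fun ω => ∑ t ∈ Finset.range n, Z t ω)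
      (by fun_prop) (hZ n).aemeasurable hp).trans (add_le_add_left ih _)

theorem lintegral_tsum_rpow_le {Z : ℕ → Ω → ℝ≥0∞} (hp : 1 ≤ p) (hZ : ∀ t, Measurable (Z t)) :
    (∫⁻ ω, (∑' t, Z t ω) ^ p ∂P) ^ (1 / p) ≤ ∑' t, (∫⁻ ω, Z t ω ^ p ∂P) ^ (1 / p) := by
  have hlim : Tendsto (fun n => ∫⁻ ω, (∑ t ∈ Finset.range n, Z t ω) ^ p ∂P) atTop
      (𝓝 (∫⁻ ω, (∑' t, Z t ω) ^ p ∂P)) := by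
    refine lintegral_tendsto_of_tendsto_of_monotone (fun n => by fun_prop)
      (ae_of_all _ fun ω m n hmn => ?_) (ae_of_all _ fun ω => ?_)
    · dsimp only
      gcongr
    · exact (ENNReal.continuous_rpow_const.tendsto _).comp (ENNReal.tendsto_nat_tsum _)
  exact le_of_tendsto' ((ENNReal.continuous_rpow_const.tendsto _).comp hlim) fun n =>
    (lintegral_sum_rpow_le hp hZ n).trans (ENNReal.sum_le_tsum _)

/-- The bound `(∑ (m t) ^ (1/r)) ^ r`, `r = max p 1`, on `E[(∑ Z t) ^ p]` when `m t = E[Z t ^ p]`: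
Minkowski's inequality for `p ≥ 1`, and subadditivity of `z ↦ z ^ p` for `p ≤ 1`. -/
def minkowskiSum (p : ℝ) (m : ℕ → ℝ≥0∞) : ℝ≥0∞ := (∑' t, m t ^ (1 / max p 1)) ^ max p 1

theorem lintegral_tsum_rpow_le_minkowskiSum {Z : ℕ → Ω → ℝ≥0∞} (hp : 0 < p)
    (hZ : ∀ t, Measurable (Z t)) :
    ∫⁻ ω, (∑' t, Z t ω) ^ p ∂P ≤ minkowskiSum p fun t => ∫⁻ ω, Z t ω ^ p ∂P := by
  rw [minkowskiSum]
  rcases le_total 1 p with h1p | hp1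
  · rw [max_eq_left h1p, ← ENNReal.rpow_inv_le_iff hp, ← one_div]
    exact lintegral_tsum_rpow_le h1p hZ
  · simp only [max_eq_right hp1, div_one, ENNReal.rpow_one]
    rw [← lintegral_tsum fun t => by fun_prop]
    exact lintegral_mono fun ω => rpow_tsum_le_tsum_rpow hp hp1 _

lemma minkowskiSum_mono {m m' : ℕ → ℝ≥0∞} (h : ∀ t, m t ≤ m' t) :
    minkowskiSum p m ≤ minkowskiSum p m' := by
  unfold minkowskiSum
  gcongr with t
  exact h t

lemma minkowskiSum_const_mul (c : ℝ≥0∞) (m : ℕ → ℝ≥0∞) :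
    minkowskiSum p (fun t => c * m t) = c * minkowskiSum p m := by
  have hr : 0 < max p 1 := by positivity
  simp only [minkowskiSum, ENNReal.mul_rpow_of_nonneg _ _ (one_div_pos.2 hr).le,
    ENNReal.tsum_mul_left, ENNReal.mul_rpow_of_nonneg _ _ hr.le]
  rw [← ENNReal.rpow_mul, one_div_mul_cancel hr.ne', ENNReal.rpow_one]

lemma tsum_le_minkowskiSum (m : ℕ → ℝ≥0∞) : ∑' t, m t ≤ minkowskiSum p m := by
  have hr : 0 < max p 1 := by positivity
  rw [minkowskiSum, ← ENNReal.rpow_inv_le_iff hr, ← one_div]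
  exact rpow_tsum_le_tsum_rpow (one_div_pos.2 hr) ((div_le_one hr).2 (le_max_right _ _)) m

lemma ne_top_of_minkowskiSum_ne_top {m : ℕ → ℝ≥0∞} (hm : minkowskiSum p m ≠ ⊤) (t : ℕ) :
    m t ≠ ⊤ :=
  ne_top_of_le_ne_top hm ((ENNReal.le_tsum t).trans (tsum_le_minkowskiSum m))

lemma tendsto_minkowskiSum_nat_add {m : ℕ → ℝ≥0∞} (hm : minkowskiSum p m ≠ ⊤) :
    Tendsto (fun n => minkowskiSum p fun t => m (t + n)) atTop (𝓝 0) := by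
  have hr : 0 < max p 1 := by positivity
  have hsum : ∑' t, m t ^ (1 / max p 1) ≠ ⊤ := fun h => hm <| by
    rw [minkowskiSum, h, ENNReal.top_rpow_of_pos hr]
  simpa only [minkowskiSum, ENNReal.zero_rpow_of_pos hr, Function.comp_def] using
    (ENNReal.continuous_rpow_const (y := max p 1)).tendsto 0 |>.comp
      (ENNReal.tendsto_sum_nat_add _ hsum)

lemma momE_le_add {Θ : Ω → ℝ} {a b r : ℝ} (hΘ : Measurable Θ) (hpos : ∀ᵐ ω ∂P, 0 < Θ ω)
    (har : a ≤ r) (hrb : r ≤ b) : momE P Θ r ≤ momE P Θ b + momE P Θ a := by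
  unfold momE
  rw [← lintegral_add_left (by fun_prop)]
  refine lintegral_mono_ae (hpos.mono fun ω hω => ?_)
  rcases le_total (Θ ω) 1 with hle | hge
  · exact le_add_left (ENNReal.ofReal_le_ofReal (Real.rpow_le_rpow_of_exponent_ge hω hle har))
  · exact le_add_right (ENNReal.ofReal_le_ofReal (Real.rpow_le_rpow_of_exponent_le hge hrb))

lemma momE_max_le {Θ₁ Θ₂ : Ω → ℝ} (hΘ₁ : Measurable Θ₁) :
    momE P (fun ω => max (Θ₁ ω) (Θ₂ ω)) p ≤ momE P Θ₁ p + momE P Θ₂ p := by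
  unfold momE
  rw [← lintegral_add_left (by fun_prop)]
  refine lintegral_mono fun ω => ?_
  dsimp only
  rcases max_choice (Θ₁ ω) (Θ₂ ω) with hmax | hmax <;> rw [hmax]
  exacts [le_self_add, le_add_self]

/- For `α < 1` the exponents are moved towards `α` so that `p ≤ 1`, where `minkowskiSum p` is
the plain sum of the moments. -/
theorem RWConditions.exists_minkowskiSum_ne_top {Θ : ℕ → Ω → ℝ} {α : ℝ}
    (hΘ : ∀ t, Measurable (Θ t)) (hpos : ∀ t, ∀ᵐ ω ∂P, 0 < Θ t ω) (hRW : RWConditions P Θ α) :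
    ∃ p q, 0 < q ∧ q < α ∧ α < p ∧
      minkowskiSum p (fun t => momE P (Θ t) p + momE P (Θ t) q) ≠ ⊤ := by
  obtain ⟨ε, hε, hεα, ⟨hα, hsum⟩ | ⟨hα, hsum⟩⟩ := hRW
  · obtain ⟨δ, hδ, hδlt⟩ := exists_between (lt_min hε (sub_pos.2 hα))
    obtain ⟨hδε, hδα⟩ := lt_min_iff.1 hδlt
    refine ⟨α + δ, α - δ, by linarith, by linarith, by linarith, ?_⟩
    rw [minkowskiSum, max_eq_right (by linarith)]
    simp only [div_one, ENNReal.rpow_one]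
    refine ne_top_of_le_ne_top (ENNReal.mul_ne_top (ENNReal.ofNat_ne_top (n := 2)) hsum) ?_
    rw [← ENNReal.tsum_mul_left]
    refine ENNReal.tsum_le_tsum fun t => ?_
    rw [two_mul]
    gcongr <;> exact momE_le_add (hΘ t) (hpos t) (by linarith) (by linarith)
  · refine ⟨α + ε, α - ε, by linarith, by linarith, by linarith, ?_⟩
    rw [minkowskiSum, max_eq_left (by linarith)]
    exact ENNReal.rpow_ne_top_of_nonneg (by linarith) hsum

lemma ofReal_le_tsum_min_div_one {z : ℕ → ℝ} {δ x : ℝ} (hx : 0 < x) (hδ : δ ≤ 1)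
    (h : ENNReal.ofReal (δ * x) < ∑' t, ENNReal.ofReal (z t)) :
    ENNReal.ofReal δ ≤ ∑' t, ENNReal.ofReal (min (z t / x) 1) := by
  by_cases hbig : ∃ t, x ≤ z t
  · obtain ⟨t, ht⟩ := hbig
    refine le_trans ?_ (ENNReal.le_tsum t)
    rw [min_eq_right ((one_le_div hx).2 ht)]
    exact ENNReal.ofReal_le_ofReal hδ
  · push Not at hbig
    have hmin : ∀ t, ENNReal.ofReal (min (z t / x) 1) =
        ENNReal.ofReal (z t) * (ENNReal.ofReal x)⁻¹ := fun t => by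
      rw [min_eq_left ((div_le_one hx).2 (hbig t).le), ENNReal.ofReal_div_of_pos hx,
        div_eq_mul_inv]
    rw [tsum_congr hmin, ENNReal.tsum_mul_right, ← div_eq_mul_inv, ENNReal.le_div_iff_mul_le
      (.inl (by simpa using hx)) (.inl ENNReal.ofReal_ne_top), ← ENNReal.ofReal_mul' hx.le]
    exact h.le

theorem measure_ofReal_lt_tsum_le_minkowskiSum {Z : ℕ → Ω → ℝ} {δ x : ℝ}
    (hZ : ∀ t, Measurable (Z t)) (hp : 0 < p) (hx : 0 < x) (hδ : 0 < δ) (hδ1 : δ ≤ 1) :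
    P {ω | ENNReal.ofReal (δ * x) < ∑' t, ENNReal.ofReal (Z t ω)} ≤
      minkowskiSum p (fun t => truncMoment P p (Z t) x) / ENNReal.ofReal δ ^ p := by
  have hδ0 : ENNReal.ofReal δ ≠ 0 := by simpa using hδ
  calc P {ω | ENNReal.ofReal (δ * x) < ∑' t, ENNReal.ofReal (Z t ω)}
      ≤ P {ω | ENNReal.ofReal δ ^ p ≤ (∑' t, ENNReal.ofReal (min (Z t ω / x) 1)) ^ p} :=
        measure_mono fun ω hω => ENNReal.rpow_le_rpow (ofReal_le_tsum_min_div_one hx hδ1 hω) hp.le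
    _ ≤ (∫⁻ ω, (∑' t, ENNReal.ofReal (min (Z t ω / x) 1)) ^ p ∂P) / ENNReal.ofReal δ ^ p :=
        meas_ge_le_lintegral_div (by fun_prop) (by simp [hδ0])
          (ENNReal.rpow_ne_top_of_nonneg hp.le ENNReal.ofReal_ne_top)
    _ ≤ _ := by
        gcongr
        exact lintegral_tsum_rpow_le_minkowskiSum hp fun t => by fun_prop

end Minkowski

section JointTail

variable {P : Measure Ω}

lemma AsympIndep.tendsto_measure_div {X₁ X₂ : Ω → ℝ} (hX : AsympIndep P X₁ X₂) :
    Tendsto (fun x => P {ω | x < X₁ ω ∧ x < X₂ ω} / P {ω | x < X₁ ω}) atTop (𝓝 0) := by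
  have hne : ∀ x, P {ω | x < X₁ ω ∧ x < X₂ ω} / P {ω | x < X₁ ω} ≠ ⊤ := fun x =>
    ne_top_of_le_ne_top ENNReal.one_ne_top
      (ENNReal.div_le_of_le_mul (by rw [one_mul]; exact measure_mono fun ω hω => hω.1))
  rw [← ENNReal.tendsto_toReal_iff hne ENNReal.zero_ne_top]
  simpa only [ENNReal.toReal_div, ENNReal.toReal_zero] using hX.1

variable [IsFiniteMeasure P]

lemma AsympIndep.tendsto_measure_div_comp_div {X₁ X₂ : Ω → ℝ} {F : ℝ → ℝ≥0∞} {θ : ℝ} {K : ℝ≥0∞}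
    (hX : AsympIndep P X₁ X₂) (hθ : 0 < θ) (hK : K ≠ ⊤)
    (hX₁ : ∀ᶠ x in atTop, P {ω | x / θ < X₁ ω} ≤ K * F x) :
    Tendsto (fun x => P {ω | x / θ < X₁ ω ∧ x / θ < X₂ ω} / F x) atTop (𝓝 0) := by
  have hlim := ENNReal.Tendsto.mul_const
    (hX.tendsto_measure_div.comp (tendsto_id.atTop_div_const hθ)) (.inr hK)
  rw [zero_mul] at hlim
  refine tendsto_of_tendsto_of_tendsto_of_le_of_le' tendsto_const_nhds hlim
    (.of_forall fun _ => zero_le) (hX₁.mono fun x hx => ENNReal.div_le_of_le_mul ?_)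
  have hle : P {ω | x / θ < X₁ ω ∧ x / θ < X₂ ω} ≤ P {ω | x / θ < X₁ ω} :=
    measure_mono fun ω hω => hω.1
  calc P {ω | x / θ < X₁ ω ∧ x / θ < X₂ ω}
      = P {ω | x / θ < X₁ ω ∧ x / θ < X₂ ω} / P {ω | x / θ < X₁ ω} * P {ω | x / θ < X₁ ω} :=
        (ENNReal.div_mul_cancel' (fun h0 => le_zero_iff.1 (hle.trans_eq h0))
          fun htop => absurd htop (measure_ne_top _ _)).symm
    _ ≤ _ := by
        rw [mul_assoc]
        exact mul_le_mul_right hx _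

variable {X₁ X₂ Θ₁ Θ₂ : Ω → ℝ} {x : ℝ}

lemma measure_lt_mul_and_lt_mul_le (hX₁ : Measurable X₁) (hX₂ : Measurable X₂)
    (hΘ₁ : Measurable Θ₁) (hΘ₂ : Measurable Θ₂)
    (hindep : IndepFun (fun ω => (Θ₁ ω, Θ₂ ω)) (fun ω => (X₁ ω, X₂ ω)) P)
    (hpos₁ : ∀ᵐ ω ∂P, 0 < Θ₁ ω) (hpos₂ : ∀ᵐ ω ∂P, 0 < Θ₂ ω) (hx : 0 ≤ x) :
    P {ω | x < Θ₁ ω * X₁ ω ∧ x < Θ₂ ω * X₂ ω} ≤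
      ∫⁻ ω, P {ω' | x / max (Θ₁ ω) (Θ₂ ω) < X₁ ω' ∧ x / max (Θ₁ ω) (Θ₂ ω) < X₂ ω'} ∂P := by
  have hS : MeasurableSet ({z : (ℝ × ℝ) × ℝ × ℝ | x < z.1.1 * z.2.1} ∩ {z | x < z.1.2 * z.2.2}) :=
    (measurableSet_lt measurable_const (by fun_prop)).inter
      (measurableSet_lt measurable_const (by fun_prop))
  refine (measure_setOf_mem_indepFun (hΘ₁.prodMk hΘ₂) (hX₁.prodMk hX₂) hindep hS).trans_le
    (lintegral_mono_ae ?_)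
  filter_upwards [hpos₁, hpos₂] with ω hω₁ hω₂
  refine measure_mono fun ω' ⟨h₁, h₂⟩ => ⟨?_, ?_⟩
  · exact (div_le_div_of_nonneg_left hx hω₁ (le_max_left _ _)).trans_lt ((div_lt_iff₀' hω₁).2 h₁)
  · exact (div_le_div_of_nonneg_left hx hω₂ (le_max_right _ _)).trans_lt ((div_lt_iff₀' hω₂).2 h₂)

theorem tendsto_measure_lt_mul_and_lt_mul_div {F G : ℝ → ℝ≥0∞} (hX₁ : Measurable X₁)
    (hX₂ : Measurable X₂) (hΘ₁ : Measurable Θ₁) (hΘ₂ : Measurable Θ₂)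
    (hindep : IndepFun (fun ω => (Θ₁ ω, Θ₂ ω)) (fun ω => (X₁ ω, X₂ ω)) P)
    (hpos₁ : ∀ᵐ ω ∂P, 0 < Θ₁ ω) (hpos₂ : ∀ᵐ ω ∂P, 0 < Θ₂ ω) (hX : AsympIndep P X₁ X₂)
    (hdom : ∀ᶠ x in atTop, ∀ θ > 0, P {ω | x / θ < X₁ ω} ≤ G θ * F x)
    (hG : ∀ θ, G θ ≠ ⊤) (hfin : ∫⁻ ω, G (max (Θ₁ ω) (Θ₂ ω)) ∂P ≠ ⊤) :
    Tendsto (fun x => P {ω | x < Θ₁ ω * X₁ ω ∧ x < Θ₂ ω * X₂ ω} / F x) atTop (𝓝 0) := by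
  set M : Ω → ℝ := fun ω => max (Θ₁ ω) (Θ₂ ω)
  set Q : ℝ → ℝ≥0∞ := fun y => P {ω | y < X₁ ω ∧ y < X₂ ω}
  have hQ : Measurable Q := Antitone.measurable fun y z hyz =>
    measure_mono fun ω hω => ⟨hyz.trans_lt hω.1, hyz.trans_lt hω.2⟩
  have hMpos : ∀ᵐ ω ∂P, 0 < M ω := hpos₁.mono fun ω hω => lt_max_of_lt_left hω
  have hlim : Tendsto (fun x => ∫⁻ ω, Q (x / M ω) / F x ∂P) atTop (𝓝 (∫⁻ _, 0 ∂P)) := by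
    refine tendsto_lintegral_filter_of_dominated_convergence (fun ω => G (M ω))
      (.of_forall fun x => by fun_prop) ?_ hfin ?_
    · filter_upwards [hdom] with x hx
      filter_upwards [hMpos] with ω hω
      exact ENNReal.div_le_of_le_mul ((measure_mono fun ω hω => hω.1).trans (hx _ hω))
    · filter_upwards [hMpos] with ω hω
      exact hX.tendsto_measure_div_comp_div hω (hG _) (hdom.mono fun x hx => hx _ hω)
  rw [lintegral_zero] at hlim
  refine tendsto_of_tendsto_of_tendsto_of_le_of_le' tendsto_const_nhds hlim
    (.of_forall fun _ => zero_le) ?_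
  filter_upwards [eventually_ge_atTop 0] with x hx
  simp only [div_eq_mul_inv]
  rw [lintegral_mul_const _ (by fun_prop)]
  gcongr
  exact measure_lt_mul_and_lt_mul_le hX₁ hX₂ hΘ₁ hΘ₂ hindep hpos₁ hpos₂ hx

end JointTail

section SingleBigJump

/-- The sum `∑ P[Z t > x]` of the individual tails, the scale on which every other tail is
measured. It is kept in `[0, ∞]` so that no summability has to be tracked. -/
def tailSum (P : Measure Ω) (Z : ℕ → Ω → ℝ) (x : ℝ) : ℝ≥0∞ := ∑' t, P {ω | x < Z t ω}

/-- The tail `P[∑ (Z t)⁺ > x]` of the series, to be compared with `tailSum`. The sum is computed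
in `[0, ∞]`, so that divergence counts as exceeding `x`. -/
def seriesTail (P : Measure Ω) (Z : ℕ → Ω → ℝ) (x : ℝ) : ℝ≥0∞ :=
  P {ω | ENNReal.ofReal x < ∑' t, ENNReal.ofReal (Z t ω)}

/-- The sum `∑ P[Z s > x, Z t > x]` over `s < t < n`, which controls the event that two of the
first `n` terms are large. -/
def jointTail (P : Measure Ω) (Z : ℕ → Ω → ℝ) (n : ℕ) (x : ℝ) : ℝ≥0∞ :=
  ∑ t ∈ Finset.range n, ∑ s ∈ Finset.range t, P {ω | x < Z s ω ∧ x < Z t ω}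

lemma sum_measure_le_measure_biUnion_add {P : Measure Ω} {A : ℕ → Set Ω}
    (hA : ∀ t, MeasurableSet (A t)) (n : ℕ) :
    ∑ t ∈ Finset.range n, P (A t) ≤ P (⋃ t ∈ Finset.range n, A t) +
      ∑ t ∈ Finset.range n, ∑ s ∈ Finset.range t, P (A s ∩ A t) := by
  induction n with
  | zero => simp
  | succ n ih =>
    have hunion : (⋃ t ∈ Finset.range (n + 1), A t) = (⋃ t ∈ Finset.range n, A t) ∪ A n := by
      rw [Finset.range_add_one, Finset.set_biUnion_insert, Set.union_comm]
    have hinter : P ((⋃ t ∈ Finset.range n, A t) ∩ A n) ≤ ∑ s ∈ Finset.range n, P (A s ∩ A n) := by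
      rw [Set.iUnion₂_inter]
      exact measure_biUnion_finset_le _ _
    rw [Finset.sum_range_succ, Finset.sum_range_succ, hunion]
    calc ∑ t ∈ Finset.range n, P (A t) + P (A n)
        ≤ P (⋃ t ∈ Finset.range n, A t) +
            ∑ t ∈ Finset.range n, ∑ s ∈ Finset.range t, P (A s ∩ A t) + P (A n) := by gcongr
      _ = P ((⋃ t ∈ Finset.range n, A t) ∪ A n) + P ((⋃ t ∈ Finset.range n, A t) ∩ A n) +
            ∑ t ∈ Finset.range n, ∑ s ∈ Finset.range t, P (A s ∩ A t) := by
          rw [measure_union_add_inter _ (hA n)]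
          ring
      _ ≤ _ := by
          rw [add_assoc, add_comm (P (_ ∩ _))]
          gcongr

lemma sum_range_le_add_natCast_mul {z : ℕ → ℝ≥0∞} {n : ℕ} {u v : ℝ≥0∞} (hu : ∀ t < n, z t ≤ u)
    (hv : ∀ t < n, ∀ s < t, z s ≤ v ∨ z t ≤ v) :
    ∑ t ∈ Finset.range n, z t ≤ u + n * v := by
  by_cases hbig : ∃ t₀ < n, v < z t₀
  · obtain ⟨t₀, ht₀, hvt₀⟩ := hbig
    have hsmall : ∀ t ∈ (Finset.range n).erase t₀, z t ≤ v := fun t ht => by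
      obtain ⟨hne, htn⟩ := Finset.mem_erase.1 ht
      rcases lt_or_gt_of_ne hne with hlt | hgt
      · exact (hv t₀ ht₀ t hlt).resolve_right hvt₀.not_ge
      · exact (hv t (Finset.mem_range.1 htn) t₀ hgt).resolve_left hvt₀.not_ge
    rw [← Finset.add_sum_erase _ _ (Finset.mem_range.2 ht₀)]
    refine add_le_add (hu t₀ ht₀) ((Finset.sum_le_card_nsmul _ _ _ hsmall).trans ?_)
    rw [nsmul_eq_mul]
    gcongr
    exact (Finset.card_erase_le).trans_eq (Finset.card_range n)
  · push Not at hbig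
    refine (Finset.sum_le_card_nsmul _ _ v fun t ht => hbig t (Finset.mem_range.1 ht)).trans ?_
    rw [nsmul_eq_mul, Finset.card_range]
    exact le_add_self

lemma exists_of_add_lt_tsum {z : ℕ → ℝ≥0∞} {n : ℕ} {u v w : ℝ≥0∞}
    (h : u + n * v + w < ∑' t, z t) :
    (∃ t, u < z t) ∨ (∃ t < n, ∃ s < t, v < z s ∧ v < z t) ∨ w < ∑' t, z (t + n) := by
  by_contra! hnot
  obtain ⟨hu, hv, hw⟩ := hnot
  refine h.not_ge ?_
  rw [← ENNReal.summable.sum_add_tsum_nat_add' (k := n)]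
  refine add_le_add (sum_range_le_add_natCast_mul (fun t _ => hu t) fun t ht s hs => ?_) hw
  exact or_iff_not_imp_left.2 fun hvs => hv t ht s hs (not_le.1 hvs)

variable {P : Measure Ω} {Z : ℕ → Ω → ℝ} {x : ℝ}

lemma tailSum_le_seriesTail_add (hZ : ∀ t, Measurable (Z t)) (n : ℕ) (hx : 0 ≤ x) :
    tailSum P Z x ≤
      seriesTail P Z x + jointTail P Z n x + tailSum P (fun t => Z (t + n)) x := by
  rw [tailSum, ← ENNReal.summable.sum_add_tsum_nat_add' (k := n)]
  refine add_le_add_left ((sum_measure_le_measure_biUnion_add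
    (fun t => measurableSet_lt measurable_const (hZ t)) n).trans (add_le_add_left ?_ _)) _
  refine measure_mono (Set.iUnion₂_subset fun t _ ω (hω : x < Z t ω) => ?_)
  exact ((ENNReal.ofReal_lt_ofReal_iff (hx.trans_lt hω)).2 hω).trans_le
    (ENNReal.le_tsum (f := fun t => ENNReal.ofReal (Z t ω)) t)

lemma seriesTail_add_le {a b c : ℝ} (ha : 0 ≤ a) (hb : 0 ≤ b) (hc : 0 ≤ c) (n : ℕ) :
    seriesTail P Z (a + n * b + c) ≤
      tailSum P Z a + jointTail P Z n b + seriesTail P (fun t => Z (t + n)) c := by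
  have hsub : {ω | ENNReal.ofReal (a + n * b + c) < ∑' t, ENNReal.ofReal (Z t ω)} ⊆
      (⋃ t, {ω | a < Z t ω}) ∪
        (⋃ t ∈ Finset.range n, ⋃ s ∈ Finset.range t, {ω | b < Z s ω ∧ b < Z t ω}) ∪
        {ω | ENNReal.ofReal c < ∑' t, ENNReal.ofReal (Z (t + n) ω)} := fun ω hω => by
    have hofReal : ENNReal.ofReal (a + n * b + c) =
        ENNReal.ofReal a + n * ENNReal.ofReal b + ENNReal.ofReal c := by
      rw [ENNReal.ofReal_add (by positivity) hc, ENNReal.ofReal_add ha (by positivity),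
        ENNReal.ofReal_mul (by positivity), ENNReal.ofReal_natCast]
    rw [Set.mem_ofPred_eq, hofReal] at hω
    simp only [Set.mem_union, Set.mem_iUnion, Set.mem_ofPred_eq, Finset.mem_range, exists_prop]
    rcases exists_of_add_lt_tsum hω with ⟨t, ht⟩ | ⟨t, htn, s, hst, hs, ht⟩ | htail
    · exact .inl (.inl ⟨t, (ENNReal.ofReal_lt_ofReal_iff'.1 ht).1⟩)
    · exact .inl (.inr ⟨t, htn, s, hst, (ENNReal.ofReal_lt_ofReal_iff'.1 hs).1,
        (ENNReal.ofReal_lt_ofReal_iff'.1 ht).1⟩)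
    · exact .inr htail
  refine (measure_mono hsub).trans ((measure_union_le _ _).trans (add_le_add_left
    ((measure_union_le _ _).trans (add_le_add (measure_iUnion_le _) ?_)) _))
  refine (measure_biUnion_finset_le _ _).trans (Finset.sum_le_sum fun t _ => ?_)
  exact measure_biUnion_finset_le _ _

variable {p : ℝ} {m : ℕ → ℝ≥0∞} {F : ℝ≥0∞}

lemma tailSum_nat_add_le (hZ : ∀ t, Measurable (Z t)) (hx : 0 < x)
    (hm : ∀ t, truncMoment P p (Z t) x ≤ m t * F) (n : ℕ) :
    tailSum P (fun t => Z (t + n)) x ≤ minkowskiSum p (fun t => m (t + n)) * F :=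
  calc tailSum P (fun t => Z (t + n)) x ≤ ∑' t, m (t + n) * F :=
        ENNReal.tsum_le_tsum fun t => (measure_lt_le_truncMoment (hZ _) hx).trans (hm _)
    _ ≤ _ := by
        rw [ENNReal.tsum_mul_right]
        gcongr
        exact tsum_le_minkowskiSum _

lemma seriesTail_nat_add_le {δ : ℝ} (hZ : ∀ t, Measurable (Z t)) (hp : 0 < p) (hx : 0 < x)
    (hδ : 0 < δ) (hδ1 : δ ≤ 1) (hm : ∀ t, truncMoment P p (Z t) x ≤ m t * F) (n : ℕ) :
    seriesTail P (fun t => Z (t + n)) (δ * x) ≤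
      minkowskiSum p (fun t => m (t + n)) / ENNReal.ofReal δ ^ p * F := by
  refine (measure_ofReal_lt_tsum_le_minkowskiSum (fun t => hZ _) hp hx hδ hδ1).trans ?_
  rw [← ENNReal.mul_div_right_comm, mul_comm, ← minkowskiSum_const_mul]
  gcongr
  exact minkowskiSum_mono fun t => (hm _).trans_eq (mul_comm _ _)

theorem ae_tsum_ofReal_ne_top (hZ : ∀ t, Measurable (Z t)) (hp : 0 < p) (hx : 0 < x) (hF : F ≠ ⊤)
    (hmsum : minkowskiSum p m ≠ ⊤) (hm : ∀ t, truncMoment P p (Z t) x ≤ m t * F) :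
    ∀ᵐ ω ∂P, ∑' t, ENNReal.ofReal (Z t ω) ≠ ⊤ := by
  have hle : ∀ n, P {ω | ¬ ∑' t, ENNReal.ofReal (Z t ω) ≠ ⊤} ≤
      minkowskiSum p (fun t => m (t + n)) * F := fun n => by
    refine le_trans (measure_mono fun ω hω => ?_) ((seriesTail_nat_add_le hZ hp hx one_pos le_rfl
      hm n).trans_eq (by rw [ENNReal.ofReal_one, ENNReal.one_rpow, div_one]))
    have htop : ∑' t, ENNReal.ofReal (Z (t + n) ω) = ⊤ := by
      rw [Set.mem_ofPred_eq, not_ne_iff, ← ENNReal.summable.sum_add_tsum_nat_add' (k := n),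
        ENNReal.add_eq_top] at hω
      exact hω.resolve_left (ENNReal.sum_ne_top.2 fun _ _ => ENNReal.ofReal_ne_top)
    exact ENNReal.ofReal_lt_top.trans_eq htop.symm
  have hlim := ENNReal.Tendsto.mul_const (tendsto_minkowskiSum_nat_add hmsum) (.inr hF)
  rw [zero_mul] at hlim
  exact le_zero_iff.1 (ge_of_tendsto' hlim hle)

section Limits

variable {ρ : ℝ}

lemma RegVarying.tendsto_ennreal_div {F : ℝ → ℝ≥0∞} (hF : RegVarying (fun x => (F x).toReal) ρ)
    {t : ℝ} (ht : 0 < t) :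
    Tendsto (fun x => F (t * x) / F x) atTop (𝓝 (ENNReal.ofReal (t ^ ρ))) := by
  refine (ENNReal.tendsto_ofReal (hF.2 t ht)).congr' ?_
  filter_upwards [eventually_gt_atTop 0] with x hx
  have htop : ∀ y, 0 < y → F y ≠ ⊤ := fun y hy => (ENNReal.toReal_pos_iff.1 (hF.1 y hy)).2.ne
  rw [ENNReal.ofReal_div_of_pos (hF.1 x hx), ENNReal.ofReal_toReal (htop _ (by positivity)),
    ENNReal.ofReal_toReal (htop x hx)]

lemma tendsto_jointTail_div
    (hjoint : ∀ s t, s ≠ t →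
      Tendsto (fun x => P {ω | x < Z s ω ∧ x < Z t ω} / tailSum P Z x) atTop (𝓝 0)) (n : ℕ) :
    Tendsto (fun x => jointTail P Z n x / tailSum P Z x) atTop (𝓝 0) := by
  simp only [jointTail, div_eq_mul_inv, Finset.sum_mul] at hjoint ⊢
  have hsum := tendsto_finsetSum (Finset.range n) fun t _ =>
    tendsto_finsetSum (Finset.range t) fun s hs => hjoint s t (Finset.mem_range.1 hs).ne
  simpa only [Finset.sum_const_zero] using hsum

lemma tendsto_jointTail_comp_mul_div (hRV : RegVarying (fun x => (tailSum P Z x).toReal) ρ)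
    (hjoint : ∀ s t, s ≠ t →
      Tendsto (fun x => P {ω | x < Z s ω ∧ x < Z t ω} / tailSum P Z x) atTop (𝓝 0)) (n : ℕ)
    {t : ℝ} (ht : 0 < t) :
    Tendsto (fun x => jointTail P Z n (t * x) / tailSum P Z x) atTop (𝓝 0) := by
  have hlim := ENNReal.Tendsto.mul
    ((tendsto_jointTail_div hjoint n).comp (tendsto_id.const_mul_atTop ht))
    (.inr ENNReal.ofReal_ne_top) (hRV.tendsto_ennreal_div ht) (.inr ENNReal.zero_ne_top)
  rw [zero_mul] at hlim
  refine hlim.congr' ((eventually_gt_atTop 0).mono fun x hx => ?_)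
  obtain ⟨hne, htop⟩ := ENNReal.toReal_pos_iff.1 (hRV.1 (t * x) (by positivity))
  dsimp only [Function.comp_apply, id]
  rw [← mul_div_assoc, ENNReal.div_mul_cancel hne.ne' htop.ne]

lemma exists_ofReal_one_sub_two_mul_rpow_lt (ρ : ℝ) {c : ℝ≥0∞} (hc : 1 < c) :
    ∃ δ : ℝ, 0 < δ ∧ δ < 1 / 2 ∧ ENNReal.ofReal ((1 - 2 * δ) ^ ρ) < c := by
  have hcont : ContinuousAt (fun δ : ℝ => ENNReal.ofReal ((1 - 2 * δ) ^ ρ)) 0 :=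
    ENNReal.continuous_ofReal.continuousAt.comp
      (ContinuousAt.rpow_const (by fun_prop) (.inl (by norm_num)))
  have hlt : ∀ᶠ δ in 𝓝 (0 : ℝ), ENNReal.ofReal ((1 - 2 * δ) ^ ρ) < c :=
    hcont.eventually_lt_const (by simpa using hc)
  have hIoo : ∀ᶠ δ in 𝓝[>] (0 : ℝ), δ ∈ Set.Ioo 0 (1 / 2) := Ioo_mem_nhdsGT one_half_pos
  obtain ⟨δ, ⟨hδ, hδ2⟩, hδc⟩ := (hIoo.and (hlt.filter_mono nhdsWithin_le_nhds)).exists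
  exact ⟨δ, hδ, hδ2, hδc⟩

variable (hZ : ∀ t, Measurable (Z t)) (hRV : RegVarying (fun x => (tailSum P Z x).toReal) ρ)
  (hmsum : minkowskiSum p m ≠ ⊤)
  (hm : ∀ᶠ x in atTop, ∀ t, truncMoment P p (Z t) x ≤ m t * tailSum P Z x)
  (hjoint : ∀ s t, s ≠ t →
    Tendsto (fun x => P {ω | x < Z s ω ∧ x < Z t ω} / tailSum P Z x) atTop (𝓝 0))

include hZ hRV hmsum hm hjoint

theorem eventually_one_le_seriesTail_div_add {ε : ℝ≥0∞} (hε : 0 < ε) :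
    ∀ᶠ x in atTop, 1 ≤ seriesTail P Z x / tailSum P Z x + ε := by
  obtain ⟨n, hn⟩ := ((tendsto_minkowskiSum_nat_add hmsum).eventually_lt_const hε).exists
  have hlim := (tendsto_jointTail_div hjoint n).add_const (minkowskiSum p fun t => m (t + n))
  rw [zero_add] at hlim
  filter_upwards [hlim.eventually_lt_const hn, hm, eventually_gt_atTop 0] with x hsmall hm hx
  obtain ⟨hne, htop⟩ := ENNReal.toReal_pos_iff.1 (hRV.1 x hx)
  calc 1 = tailSum P Z x / tailSum P Z x := (ENNReal.div_self hne.ne' htop.ne).symm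
    _ ≤ (seriesTail P Z x + jointTail P Z n x +
          minkowskiSum p (fun t => m (t + n)) * tailSum P Z x) / tailSum P Z x := by
        gcongr
        exact (tailSum_le_seriesTail_add hZ n hx.le).trans
          (add_le_add_right (tailSum_nat_add_le hZ hx hm n) _)
    _ = seriesTail P Z x / tailSum P Z x + (jointTail P Z n x / tailSum P Z x +
          minkowskiSum p (fun t => m (t + n))) := by
        rw [ENNReal.add_div, ENNReal.add_div, ENNReal.mul_div_cancel_right hne.ne' htop.ne,
          add_assoc]
    _ ≤ _ := by gcongr

theorem eventually_seriesTail_div_le_one_add (hp : 0 < p) {ε : ℝ≥0∞} (hε : 0 < ε) :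
    ∀ᶠ x in atTop, seriesTail P Z x / tailSum P Z x ≤ 1 + ε := by
  obtain ⟨δ, hδ, hδ2, hδε⟩ := exists_ofReal_one_sub_two_mul_rpow_lt ρ
    (ENNReal.lt_add_right ENNReal.one_ne_top hε.ne')
  have hδp : ENNReal.ofReal δ ^ p ≠ 0 :=
    (ENNReal.rpow_pos (ENNReal.ofReal_pos.2 hδ) ENNReal.ofReal_ne_top).ne'
  have hrem := (ENNReal.Tendsto.div_const (tendsto_minkowskiSum_nat_add hmsum)
    (.inr hδp)).const_add (ENNReal.ofReal ((1 - 2 * δ) ^ ρ))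
  rw [ENNReal.zero_div, add_zero] at hrem
  obtain ⟨n, hn, hn1⟩ := ((hrem.eventually_lt_const hδε).and (eventually_ge_atTop 1)).exists
  have hn0 : (0 : ℝ) < n := by exact_mod_cast hn1
  have hlim := ((hRV.tendsto_ennreal_div (by linarith : 0 < 1 - 2 * δ)).add
    (tendsto_jointTail_comp_mul_div hRV hjoint n (div_pos hδ hn0))).add_const
      (minkowskiSum p (fun t => m (t + n)) / ENNReal.ofReal δ ^ p)
  rw [add_zero] at hlim
  filter_upwards [hlim.eventually_lt_const hn, hm, eventually_gt_atTop 0] with x hlt hm hx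
  obtain ⟨hne, htop⟩ := ENNReal.toReal_pos_iff.1 (hRV.1 x hx)
  refine le_trans ?_ hlt.le
  have hsplit : x = (1 - 2 * δ) * x + n * (δ / n * x) + δ * x := by
    field_simp
    ring
  calc seriesTail P Z x / tailSum P Z x
      ≤ (tailSum P Z ((1 - 2 * δ) * x) + jointTail P Z n (δ / n * x) +
          minkowskiSum p (fun t => m (t + n)) / ENNReal.ofReal δ ^ p * tailSum P Z x) /
            tailSum P Z x := by
        gcongr
        nth_rw 1 [hsplit]
        exact (seriesTail_add_le (mul_nonneg (by linarith) hx.le) (by positivity)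
          (by positivity) n).trans
            (add_le_add_right (seriesTail_nat_add_le hZ hp hx hδ (by linarith) hm n) _)
    _ = _ := by
        rw [ENNReal.add_div, ENNReal.add_div, ENNReal.mul_div_cancel_right hne.ne' htop.ne]

theorem tendsto_tailSum_div_seriesTail (hp : 0 < p) :
    Tendsto (fun x => (tailSum P Z x).toReal / (seriesTail P Z x).toReal) atTop (𝓝 1) := by
  have hlim : Tendsto (fun x => seriesTail P Z x / tailSum P Z x) atTop (𝓝 1) := by
    refine (ENNReal.tendsto_nhds ENNReal.one_ne_top).2 fun ε hε => ?_
    filter_upwards [eventually_one_le_seriesTail_div_add hZ hRV hmsum hm hjoint hε,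
      eventually_seriesTail_div_le_one_add hZ hRV hmsum hm hjoint hp hε] with x hlower hupper
    exact ⟨tsub_le_iff_right.2 hlower, hupper⟩
  have hinv := ((ENNReal.tendsto_toReal ENNReal.one_ne_top).comp hlim).inv₀ (by simp)
  simpa only [Function.comp_def, ENNReal.toReal_div, inv_div, ENNReal.toReal_one, inv_one]
    using hinv

end Limits

end SingleBigJump

section WeightedSum

variable {P : Measure Ω}

lemma RegVarying.antitoneOn_tailSum {Z : ℕ → Ω → ℝ} {ρ : ℝ}
    (hRV : RegVarying (fun x => (tailSum P Z x).toReal) ρ) :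
    AntitoneOn (fun x => (tailSum P Z x).toReal) (Set.Ioi 0) := fun x hx _ _ hxy =>
  ENNReal.toReal_mono (ENNReal.toReal_pos_iff.1 (hRV.1 x hx)).2.ne
    (ENNReal.tsum_le_tsum fun _ => measure_mono fun _ hω => hxy.trans_lt hω)

variable {X Θ : ℕ → Ω → ℝ} {α p q : ℝ} {K : ℝ≥0∞}

lemma RegVarying.exists_measure_lt_le_tailSum [IsFiniteMeasure P] [NeZero P]
    (hRV : RegVarying (fun x => (tailSum P (fun t ω => Θ t ω * X t ω) x).toReal) (-α))
    (hΘX : IndepFun (Θ 0) (X 0) P) (hpos : ∀ᵐ ω ∂P, 0 < Θ 0 ω) (hK : K ≠ ⊤)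
    (hdom : ∀ᶠ x in atTop, ∀ t, P {ω | x < X t ω} ≤ K * P {ω | x < X 0 ω}) :
    ∃ A, 0 ≤ A ∧ ∀ᶠ x in atTop, ∀ t, P {ω | x < X t ω} ≤
      ENNReal.ofReal (A * (tailSum P (fun t ω => Θ t ω * X t ω) x).toReal) := by
  set H := tailSum P fun t ω => Θ t ω * X t ω
  obtain ⟨a, ha, c, hc, hle⟩ := exists_measure_lt_le_measure_mul hΘX hpos
  refine ⟨(K * c).toReal * (a ^ (-α) + 1), by positivity, ?_⟩
  filter_upwards [hdom, hRV.eventually_comp_mul_le ha (lt_add_one _), eventually_gt_atTop 0]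
    with x hdom hscale hx t
  have htop : H (a * x) ≠ ⊤ := (ENNReal.toReal_pos_iff.1 (hRV.1 (a * x) (by positivity))).2.ne
  calc P {ω | x < X t ω} ≤ K * (c * H (a * x)) :=
        (hdom t).trans (mul_le_mul_right ((hle x hx.le).trans
          (mul_le_mul_right (ENNReal.le_tsum (f := fun t => P {ω | a * x < Θ t ω * X t ω}) 0) _)) _)
    _ = ENNReal.ofReal ((K * c).toReal * (H (a * x)).toReal) := by
        rw [← ENNReal.toReal_mul,
          ENNReal.ofReal_toReal (ENNReal.mul_ne_top (ENNReal.mul_ne_top hK hc) htop), mul_assoc]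
    _ ≤ _ := by
        rw [mul_assoc]
        gcongr

theorem tendsto_measure_lt_mul_and_lt_mul_div_of_truncMoment_le [IsFiniteMeasure P]
    {X₁ X₂ Θ₁ Θ₂ : Ω → ℝ} {C : ℝ} {F : ℝ → ℝ≥0∞} (hX₁ : Measurable X₁)
    (hX₂ : Measurable X₂) (hΘ₁ : Measurable Θ₁) (hΘ₂ : Measurable Θ₂)
    (hindep : IndepFun (fun ω => (Θ₁ ω, Θ₂ ω)) (fun ω => (X₁ ω, X₂ ω)) P)
    (hpos₁ : ∀ᵐ ω ∂P, 0 < Θ₁ ω) (hpos₂ : ∀ᵐ ω ∂P, 0 < Θ₂ ω) (hX : AsympIndep P X₁ X₂)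
    (hC : 0 ≤ C) (hbound : ∀ᶠ x in atTop, ∀ θ > 0,
      truncMoment P p X₁ (x / θ) ≤ ENNReal.ofReal (C * (θ ^ p + θ ^ q)) * F x)
    (hmom₁ : momE P Θ₁ p + momE P Θ₁ q ≠ ⊤) (hmom₂ : momE P Θ₂ p + momE P Θ₂ q ≠ ⊤) :
    Tendsto (fun x => P {ω | x < Θ₁ ω * X₁ ω ∧ x < Θ₂ ω * X₂ ω} / F x) atTop (𝓝 0) := by
  refine tendsto_measure_lt_mul_and_lt_mul_div
    (G := fun θ => ENNReal.ofReal (C * (θ ^ p + θ ^ q))) hX₁ hX₂ hΘ₁ hΘ₂ hindep hpos₁ hpos₂ hX ?_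
    (fun _ => ENNReal.ofReal_ne_top) ?_
  · filter_upwards [hbound, eventually_gt_atTop 0] with x hx hx0 θ hθ
    exact (measure_lt_le_truncMoment hX₁ (div_pos hx0 hθ)).trans (hx θ hθ)
  · rw [lintegral_const_mul_rpow_add_rpow (hΘ₁.max hΘ₂)
      (hpos₁.mono fun ω hω => lt_max_of_lt_left hω) hC]
    refine ENNReal.mul_ne_top ENNReal.ofReal_ne_top (ne_top_of_le_ne_top
      (ENNReal.add_ne_top.2 ⟨hmom₁, hmom₂⟩) ?_)
    exact (add_le_add (momE_max_le hΘ₁) (momE_max_le hΘ₁)).trans_eq (add_add_add_comm _ _ _ _)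

variable [IsProbabilityMeasure P]

theorem RegVarying.exists_truncMoment_le_tailSum
    (hRV : RegVarying (fun x => (tailSum P (fun t ω => Θ t ω * X t ω) x).toReal) (-α))
    (hX : ∀ t, Measurable (X t)) (hΘX : IndepFun (Θ 0) (X 0) P) (hpos : ∀ᵐ ω ∂P, 0 < Θ 0 ω)
    (hK : K ≠ ⊤) (hdom : ∀ᶠ x in atTop, ∀ t, P {ω | x < X t ω} ≤ K * P {ω | x < X 0 ω})
    (hq : 0 ≤ q) (hqα : q < α) (hαp : α < p) :
    ∃ C, 0 ≤ C ∧ ∀ᶠ x in atTop, ∀ t, ∀ θ > 0, truncMoment P p (X t) (x / θ) ≤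
      ENNReal.ofReal (C * (θ ^ p + θ ^ q)) * tailSum P (fun t ω => Θ t ω * X t ω) x := by
  obtain ⟨A, hA, hle⟩ := hRV.exists_measure_lt_le_tailSum hΘX hpos hK hdom
  obtain ⟨C, hC, hbound⟩ :=
    RegVarying.exists_truncMoment_le hX hRV hRV.antitoneOn_tailSum hq hqα hαp hA hle
  refine ⟨C, hC, ?_⟩
  filter_upwards [hbound, eventually_gt_atTop 0] with x hbound hx t θ hθ
  refine (hbound t θ hθ).trans_eq ?_
  rw [mul_left_comm, mul_comm, ENNReal.ofReal_mul (by positivity),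
    ENNReal.ofReal_toReal (ENNReal.toReal_pos_iff.1 (hRV.1 x hx)).2.ne]

theorem stmt5_general (hX : ∀ t, Measurable (X t)) (hΘ : ∀ t, Measurable (Θ t))
    (hpos : ∀ t, ∀ᵐ ω ∂P, 0 < Θ t ω) (hK : K ≠ ⊤)
    (hdom : ∀ᶠ x in atTop, ∀ t, P {ω | x < X t ω} ≤ K * P {ω | x < X 0 ω})
    (hpair : ∀ s t, s ≠ t → AsympIndep P (X s) (X t))
    (hindep : ∀ s t, IndepFun (fun ω => (Θ s ω, Θ t ω)) (fun ω => (X s ω, X t ω)) P)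
    (hRW : RWConditions P Θ α)
    (hRV : RegVarying (fun x => (tailSum P (fun t ω => Θ t ω * X t ω) x).toReal) (-α)) :
    Tendsto (fun x => (tailSum P (fun t ω => Θ t ω * X t ω) x).toReal /
        (seriesTail P (fun t ω => Θ t ω * X t ω) x).toReal) atTop (𝓝 1) ∧
      ∀ᵐ ω ∂P, ∑' t, ENNReal.ofReal (Θ t ω * X t ω) ≠ ⊤ := by
  set Z : ℕ → Ω → ℝ := fun t ω => Θ t ω * X t ω
  have hZ : ∀ t, Measurable (Z t) := fun t => (hΘ t).mul (hX t)
  have hΘX : ∀ t, IndepFun (Θ t) (X t) P := fun t =>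
    (hindep t t).comp measurable_fst measurable_fst
  obtain ⟨p, q, hq, hqα, hαp, hmom⟩ := hRW.exists_minkowskiSum_ne_top hΘ hpos
  have hp : 0 < p := by linarith
  obtain ⟨C, hC, hbound⟩ :=
    hRV.exists_truncMoment_le_tailSum hX (hΘX 0) (hpos 0) hK hdom hq.le hqα hαp
  set m : ℕ → ℝ≥0∞ := fun t => ENNReal.ofReal C * (momE P (Θ t) p + momE P (Θ t) q)
  have hmsum : minkowskiSum p m ≠ ⊤ := by
    rw [minkowskiSum_const_mul]
    exact ENNReal.mul_ne_top ENNReal.ofReal_ne_top hmom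
  have hm : ∀ᶠ x in atTop, ∀ t, truncMoment P p (Z t) x ≤ m t * tailSum P Z x :=
    hbound.mono fun x hx t => truncMoment_mul_le (hΘ t) (hX t) (hΘX t) (hpos t) hC (hx t)
  have hjoint : ∀ s t, s ≠ t →
      Tendsto (fun x => P {ω | x < Z s ω ∧ x < Z t ω} / tailSum P Z x) atTop (𝓝 0) :=
    fun s t hst => tendsto_measure_lt_mul_and_lt_mul_div_of_truncMoment_le (hX s) (hX t) (hΘ s)
      (hΘ t) (hindep s t) (hpos s) (hpos t) (hpair s t hst) hC (hbound.mono fun x hx => hx s)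
      (ne_top_of_minkowskiSum_ne_top hmom s) (ne_top_of_minkowskiSum_ne_top hmom t)
  obtain ⟨x, hx, hx0⟩ := (hm.and (eventually_gt_atTop 0)).exists
  exact ⟨tendsto_tailSum_div_seriesTail hZ hRV hmsum hm hjoint hp,
    ae_tsum_ofReal_ne_top hZ hp hx0 (ENNReal.toReal_pos_iff.1 (hRV.1 x hx0)).2.ne hmsum hx⟩

end WeightedSum

/-- Proposition 4.7: if the `X_t` are identically distributed, pairwise asymptotically
independent and positive, the positive weights `Θ_t` satisfy the RW moment conditions and
are independent of `{X_t}`, and `x ↦ Σ_t P[Θ_t X_t > x]` is regularly varying of index `-α`,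
then `Σ_t P[Θ_t X_t > x] ~ P[X_(∞) > x]` as `x → ∞` and `X_(∞)` is finite a.s. -/
theorem stmt5 {Ω : Type*} [MeasurableSpace Ω] (P : Measure Ω) [IsProbabilityMeasure P]
    (X Θ : ℕ → Ω → ℝ) (α : ℝ) (hα : 0 < α)
    (hXmeas : ∀ t, Measurable (X t)) (hΘmeas : ∀ t, Measurable (Θ t))
    (hXpos : ∀ t, ∀ᵐ ω ∂P, 0 < X t ω) (hΘpos : ∀ t, ∀ᵐ ω ∂P, 0 < Θ t ω)
    (hident : ∀ t, IdentDistrib (X t) (X 0) P P)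
    (hpair : ∀ s t : ℕ, s ≠ t → AsympIndep P (X s) (X t))
    (hindep : IndepFun (fun ω => fun t => Θ t ω) (fun ω => fun t => X t ω) P)
    (hRW : RWConditions P Θ α)
    (hRV : RegVarying
      (fun x : ℝ => (∑' t : ℕ, P {ω | x < Θ t ω * X t ω}).toReal) (-α)) :
    Tendsto (fun x : ℝ =>
        (∑' t : ℕ, P {ω | x < Θ t ω * X t ω}).toReal /
          (P {ω | ENNReal.ofReal x < ∑' t : ℕ, ENNReal.ofReal (Θ t ω * X t ω)}).toReal)
      atTop (nhds 1) ∧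
      (∀ᵐ ω ∂P, (∑' t : ℕ, ENNReal.ofReal (Θ t ω * X t ω)) ≠ ⊤) := by
  refine stmt5_general hXmeas hΘmeas hΘpos ENNReal.one_ne_top (.of_forall fun x t => ?_) hpair
    (fun s t => hindep.comp (φ := fun u : ℕ → ℝ => (u s, u t)) (ψ := fun u : ℕ → ℝ => (u s, u t))
      (by fun_prop) (by fun_prop)) hRW hRV
  exact ((hident t).measure_mem_eq measurableSet_Ioi).trans_le (one_mul _).ge
end
end

section
/- Let ρ be a finite positive Borel measure on [0,∞) and fix α ∈ [0,2). The following are equivalent: (i) y ↦ ρ((y,∞)) is regularly varying of index −α; (ii) y ↦ ∫₀^∞ t²/(t²+y²) dρ(t) is regularly varying of index −α. If either condition holds, then ∫₀^∞ t²/(t²+y²) dρ(t) ~ c_α · ρ((y,∞)) as y→∞, where c_α = (πα/2)/sin(πα/2) for α ∈ (0,2) and c₀ = 1. -/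
open MeasureTheory Filter Topology
open scoped ENNReal

noncomputable section

/-- `μ ∈ M_p`: a Borel probability measure on `[0,∞)` with finite `p`-th moment and
infinite `(p+1)`-th moment. -/
def MemMp (μ : Measure ℝ) (p : ℕ) : Prop :=
  IsProbabilityMeasure μ ∧ μ (Set.Iio 0) = 0 ∧
    (∫⁻ t, ENNReal.ofReal (t ^ p) ∂μ) ≠ ⊤ ∧ (∫⁻ t, ENNReal.ofReal (t ^ (p + 1)) ∂μ) = ⊤

/-- The remainder term in the Laurent series expansion of the Cauchy transform of `μ`:
`r_G(z) = ∫₀^∞ t^{p+1} (z − t)⁻¹ dμ(t)`. -/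
def rG (μ : Measure ℝ) (p : ℕ) (z : ℂ) : ℂ :=
  ∫ t : ℝ, (t : ℂ) ^ (p + 1) / (z - (t : ℂ)) ∂μ

/-!
Write `F y` for the tail `μ((y,∞))` and `G y` for the transform `∫ t² / (t² + y²) dμ(t)`.

The layer cake formula gives `G y = ∫₀^∞ F(yv) k(v) dv` with `k(v) = 2v / (v² + 1)²`. If `F` is
regularly varying of index `-α`, a Potter bound dominates `F(yv) / F(y)`, so `G y / F y` tends to
`∫ v^(-α) k(v) dv`, which the substitution `x = v² / (v² + 1)` turns into a beta integral.

Conversely, let `G` be regularly varying and put `x = t² / (t² + y²)`. The mean of the resolvent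
`1 / (1 - θx)` with respect to the measure `x dμ / G y` is a constant times `G(sy) / G(y)` with
`s = (1 - θ)^(-1/2)`, hence converges as `y → ∞`. The resolvents span a dense subspace of `C([0,1])`
(the powers `xᵏ` are recovered successively by letting `θ → 0`), so the mean of every continuous
function converges. Taking for `h(x) x` a continuous cutoff between the indicators of `t > y` and
`t > ay`, where `a < 1`, produces a function `K`, asymptotically proportional to `G`, with
`F y ≤ K y ≤ F(ay)`. The limit of `K / G` is not `0` because
`G(2y) ≤ F(sy) + (s² + 1) / (s² + 4) G(y)` and, for small `s`, `(s² + 1) / (s² + 4) < 2^(-α)`,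
so that `F` is at least a positive multiple of `G`. Finally, `a → 1` shows that `F` is regularly
varying.
-/

open Set

/-- The ratio `t² / (t² + y²)`, the integrand of the Stieltjes-type transform. It is an element
of `[0,1]` so that continuous functions on `[0,1]` can be composed with it. -/
def sqRatio (y t : ℝ) : Icc (0 : ℝ) 1 :=
  ⟨t ^ 2 / (t ^ 2 + y ^ 2), by positivity,
    div_le_one_of_le₀ (le_add_of_nonneg_right (sq_nonneg y)) (by positivity)⟩

/-- The coordinate function `x ↦ x` on a set of reals, a generator of the polynomial functions. -/
def coordFun (s : Set ℝ) : C(s, ℝ) := (ContinuousMap.id ℝ).restrict s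

@[simp] lemma coordFun_apply {s : Set ℝ} (x : s) : coordFun s x = x := rfl

/-- The tail `y ↦ μ((y,∞))` of a measure. -/
def tailFun (μ : Measure ℝ) (y : ℝ) : ℝ := (μ (Ioi y)).toReal

/-- The Stieltjes-type transform `y ↦ ∫ t² / (t² + y²) dμ(t)` of a measure. -/
def stieltjesFun (μ : Measure ℝ) (y : ℝ) : ℝ := ∫ t, (sqRatio y t : ℝ) ∂μ

/-- The derivative of `v ↦ v² / (v² + 1)`, the weight in the representation of the Stieltjes-type
transform as an average of the tail. -/
def stieltjesKernel (v : ℝ) : ℝ := 2 * v / (v ^ 2 + 1) ^ 2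

section Beta

open Real ProbabilityTheory

lemma integral_rpow_mul_one_sub_rpow {a b : ℝ} (ha : 0 < a) (hb : 0 < b) :
    ∫ x in Ioo (0 : ℝ) 1, x ^ (a - 1) * (1 - x) ^ (b - 1) = beta a b := by
  have hB := beta_pos ha hb
  have hpdf : ∫ x in Ioo (0 : ℝ) 1, 1 / beta a b * x ^ (a - 1) * (1 - x) ^ (b - 1) = 1 := by
    rw [integral_eq_lintegral_of_nonneg_ae, ← lintegral_betaPDF, lintegral_betaPDF_eq_one ha hb,
      ENNReal.toReal_one]
    · refine ae_restrict_of_forall_mem measurableSet_Ioo fun x hx => ?_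
      have hx0 := hx.1.le
      have hx1 := sub_nonneg.2 hx.2.le
      simp only [Pi.zero_apply]
      positivity
    · exact Measurable.aestronglyMeasurable (by fun_prop)
  simp only [mul_assoc, integral_const_mul] at hpdf
  field_simp at hpdf
  exact hpdf

lemma beta_one_sub_one_add {β : ℝ} (hβ : β ≠ 0) :
    beta (1 - β) (1 + β) = π * β / sin (π * β) := by
  have hreflect := Gamma_mul_Gamma_one_sub β
  rw [beta, show 1 - β + (1 + β) = 2 by ring, Gamma_two, div_one, add_comm, Gamma_add_one hβ,
    mul_left_comm, mul_comm (Gamma _), hreflect]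
  ring

lemma beta_one_sub_half_one_add_half (α : ℝ) :
    beta (1 - α / 2) (1 + α / 2) = if α = 0 then 1 else (π * α / 2) / sin (π * α / 2) := by
  split_ifs with hα
  · simp [hα, beta, one_add_one_eq_two]
  · rw [beta_one_sub_one_add (div_ne_zero hα two_ne_zero), ← mul_div_assoc]

end Beta

section Kernel

lemma stieltjesKernel_nonneg {v : ℝ} (hv : 0 ≤ v) : 0 ≤ stieltjesKernel v := by
  unfold stieltjesKernel
  positivity

lemma continuous_stieltjesKernel : Continuous stieltjesKernel :=
  Continuous.div (by fun_prop) (by fun_prop) fun v => by positivity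

lemma hasDerivAt_sq_div_sq_add_one (v : ℝ) :
    HasDerivAt (fun v : ℝ => v ^ 2 / (v ^ 2 + 1)) (stieltjesKernel v) v := by
  refine ((hasDerivAt_pow 2 v).div ((hasDerivAt_pow 2 v).add_const 1)
    (by positivity)).congr_deriv ?_
  simp only [stieltjesKernel]
  push_cast
  ring

lemma monotoneOn_sq_div_sq_add_one : MonotoneOn (fun v : ℝ => v ^ 2 / (v ^ 2 + 1)) (Ioi 0) :=
  fun u hu v _ huv => by
    have hsq : u ^ 2 ≤ v ^ 2 := pow_le_pow_left₀ (le_of_lt hu) huv 2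
    rw [div_le_div_iff₀ (by positivity) (by positivity)]
    linarith

lemma image_sq_div_sq_add_one_Ioi :
    (fun v : ℝ => v ^ 2 / (v ^ 2 + 1)) '' Ioi 0 = Ioo 0 1 := by
  refine Subset.antisymm (image_subset_iff.2 fun v (hv : 0 < v) => ?_) fun x ⟨hx0, hx1⟩ => ?_
  · exact ⟨by positivity, (div_lt_one (by positivity)).2 (lt_add_one _)⟩
  · have hx : 0 < x / (1 - x) := div_pos hx0 (sub_pos.2 hx1)
    have hx1' : 1 - x ≠ 0 := (sub_pos.2 hx1).ne'
    refine ⟨√(x / (1 - x)), Real.sqrt_pos.2 hx, ?_⟩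
    simp only [Real.sq_sqrt hx.le]
    field_simp
    ring

lemma integral_rpow_neg_mul_stieltjesKernel {α : ℝ} (hα : |α| < 2) :
    ∫ v in Ioi (0 : ℝ), v ^ (-α) * stieltjesKernel v =
      ProbabilityTheory.beta (1 - α / 2) (1 + α / 2) := by
  obtain ⟨hα', hα⟩ := abs_lt.1 hα
  rw [← integral_rpow_mul_one_sub_rpow (by linarith) (by linarith), ← image_sq_div_sq_add_one_Ioi,
    integral_image_eq_integral_deriv_smul_of_monotoneOn measurableSet_Ioi
      (fun v _ => (hasDerivAt_sq_div_sq_add_one v).hasDerivWithinAt) monotoneOn_sq_div_sq_add_one]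
  refine setIntegral_congr_fun measurableSet_Ioi fun v (hv : 0 < v) => ?_
  have hcompl : 1 - v ^ 2 / (v ^ 2 + 1) = (v ^ 2 + 1)⁻¹ := by field_simp; ring
  have hpow : v ^ (-α) = (v ^ 2) ^ (-(α / 2)) := by
    rw [← Real.rpow_natCast_mul hv.le]
    congr 1
    push_cast
    ring
  simp only [smul_eq_mul, hcompl, hpow]
  rw [show 1 - α / 2 - 1 = -(α / 2) by ring, show 1 + α / 2 - 1 = α / 2 by ring,
    Real.div_rpow (by positivity) (by positivity), Real.inv_rpow (by positivity),
    Real.rpow_neg (x := v ^ 2 + 1) (by positivity)]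
  have : 0 < (v ^ 2 + 1) ^ (α / 2) := by positivity
  field_simp

lemma integrableOn_rpow_neg_mul_stieltjesKernel {α : ℝ} (hα : |α| < 2) :
    IntegrableOn (fun v : ℝ => v ^ (-α) * stieltjesKernel v) (Ioi 0) := by
  refine Integrable.of_integral_ne_zero ?_
  rw [integral_rpow_neg_mul_stieltjesKernel hα]
  obtain ⟨hα', hα⟩ := abs_lt.1 hα
  exact (ProbabilityTheory.beta_pos (by linarith) (by linarith)).ne'

end Kernel

section SqRatio

lemma coe_sqRatio (y t : ℝ) : (sqRatio y t : ℝ) = t ^ 2 / (t ^ 2 + y ^ 2) := rfl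

lemma coe_sqRatio_eq_div_sq {y : ℝ} (hy : y ≠ 0) (t : ℝ) :
    (sqRatio y t : ℝ) = (t / y) ^ 2 / ((t / y) ^ 2 + 1) := by
  rw [coe_sqRatio]
  field_simp

lemma measurable_sqRatio (y : ℝ) : Measurable (sqRatio y) :=
  Measurable.subtype_mk (by fun_prop)

lemma sq_div_sq_add_one_lt_sqRatio_iff {a y t : ℝ} (ha : 0 ≤ a) (hy : 0 < y) (ht : 0 ≤ t) :
    a ^ 2 / (a ^ 2 + 1) < sqRatio y t ↔ a * y < t := by
  rw [coe_sqRatio, div_lt_div_iff₀ (by positivity) (by positivity),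
    ← pow_lt_pow_iff_left₀ (by positivity) ht two_ne_zero, mul_pow]
  constructor <;> intro h <;> linarith

lemma one_sub_mul_sqRatio_mul_sqRatio {θ y : ℝ} (hθ : θ < 1) (hy : 0 < y) (t : ℝ) :
    (1 - θ * sqRatio y t) * sqRatio ((√(1 - θ))⁻¹ * y) t = (1 - θ) * sqRatio y t := by
  have hθ' : 0 < 1 - θ := sub_pos.2 hθ
  have : 0 < (1 - θ) * t ^ 2 + y ^ 2 := by positivity
  simp only [coe_sqRatio, mul_pow, inv_pow, Real.sq_sqrt hθ'.le]
  field_simp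
  ring

lemma integrable_comp_sqRatio (μ : Measure ℝ) [IsFiniteMeasure μ] (g : C(Icc (0 : ℝ) 1, ℝ))
    (y : ℝ) : Integrable (fun t => g (sqRatio y t)) μ :=
  Integrable.of_bound (C := ‖g‖)
    (g.continuous.measurable.comp (measurable_sqRatio y)).aestronglyMeasurable
    (Eventually.of_forall fun _ => g.norm_coe_le_norm _)

lemma integrable_sqRatio (μ : Measure ℝ) [IsFiniteMeasure μ] (y : ℝ) :
    Integrable (fun t => (sqRatio y t : ℝ)) μ :=
  integrable_comp_sqRatio μ (coordFun _) y

lemma integrable_mul_sqRatio (μ : Measure ℝ) [IsFiniteMeasure μ] (g : C(Icc (0 : ℝ) 1, ℝ))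
    (y : ℝ) : Integrable (fun t => g (sqRatio y t) * (sqRatio y t : ℝ)) μ :=
  integrable_comp_sqRatio μ (g * coordFun _) y

end SqRatio

section TailAndTransform

lemma ae_nonneg_of_measure_Iio_eq_zero {μ : Measure ℝ} (hμ : μ (Iio 0) = 0) :
    ∀ᵐ t ∂μ, (0 : ℝ) ≤ t := by
  filter_upwards [compl_mem_ae_iff.2 hμ] with t ht
  exact not_lt.1 ht

lemma tailFun_nonneg (μ : Measure ℝ) (y : ℝ) : 0 ≤ tailFun μ y := ENNReal.toReal_nonneg

lemma stieltjesFun_nonneg (μ : Measure ℝ) (y : ℝ) : 0 ≤ stieltjesFun μ y :=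
  integral_nonneg fun t => (sqRatio y t).2.1

lemma integral_indicator_Ioi_eq_tailFun (μ : Measure ℝ) (y : ℝ) :
    ∫ t, (Ioi y).indicator (1 : ℝ → ℝ) t ∂μ = tailFun μ y :=
  integral_indicator_one measurableSet_Ioi

lemma lintegral_sqRatio_eq_lintegral_measure_Ioi {μ : Measure ℝ} (hμ : μ (Iio 0) = 0)
    {y : ℝ} (hy : 0 < y) :
    ∫⁻ t, ENNReal.ofReal (sqRatio y t) ∂μ =
      ∫⁻ v in Ioi (0 : ℝ), μ (Ioi (y * v)) * ENNReal.ofReal (stieltjesKernel v) := by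
  have hprim (x : ℝ) : ∫ v in (0 : ℝ)..x, stieltjesKernel v = x ^ 2 / (x ^ 2 + 1) := by
    rw [intervalIntegral.integral_eq_sub_of_hasDerivAt
      (fun v _ => hasDerivAt_sq_div_sq_add_one v)
      (continuous_stieltjesKernel.intervalIntegrable _ _)]
    simp
  have hlevel (v : ℝ) : {t | v < t / y} = Ioi (y * v) := by
    ext t
    rw [mem_ofPred_eq, lt_div_iff₀' hy, mem_Ioi]
  have hlayer := lintegral_comp_eq_lintegral_meas_lt_mul μ (f := fun t => t / y)
    (g := stieltjesKernel)
    ((ae_nonneg_of_measure_Iio_eq_zero hμ).mono fun t ht => div_nonneg ht hy.le)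
    (by fun_prop) (fun t _ => continuous_stieltjesKernel.intervalIntegrable _ _)
    (ae_restrict_of_forall_mem measurableSet_Ioi fun v hv => stieltjesKernel_nonneg (le_of_lt hv))
  simpa only [hprim, hlevel, ← coe_sqRatio_eq_div_sq hy.ne'] using hlayer

variable (μ : Measure ℝ) [IsFiniteMeasure μ]

lemma tailFun_antitone : Antitone (tailFun μ) := fun _ _ h =>
  ENNReal.toReal_mono (measure_ne_top _ _) (measure_mono (Ioi_subset_Ioi h))

lemma integrable_indicator_Ioi (y : ℝ) : Integrable ((Ioi y).indicator (1 : ℝ → ℝ)) μ :=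
  (integrable_const (1 : ℝ)).indicator measurableSet_Ioi

lemma stieltjesFun_pos (h : 0 < tailFun μ 0) (y : ℝ) : 0 < stieltjesFun μ y := by
  rw [stieltjesFun, integral_pos_iff_support_of_nonneg (fun t => (sqRatio y t).2.1)
    (integrable_sqRatio μ y)]
  refine (ENNReal.toReal_pos_iff.1 h).1.trans_le (measure_mono fun t (ht : 0 < t) => ?_)
  rw [Function.mem_support, coe_sqRatio]
  positivity

lemma stieltjesFun_eq_integral_tailFun (hμ : μ (Iio 0) = 0) {y : ℝ} (hy : 0 < y) :
    stieltjesFun μ y = ∫ v in Ioi (0 : ℝ), tailFun μ (y * v) * stieltjesKernel v := by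
  have hmeas : Measurable fun v => tailFun μ (y * v) * stieltjesKernel v :=
    ((tailFun_antitone μ).measurable.comp (by fun_prop)).mul continuous_stieltjesKernel.measurable
  rw [stieltjesFun, integral_eq_lintegral_of_nonneg_ae
    (Eventually.of_forall fun t => (sqRatio y t).2.1) (integrable_sqRatio μ y).1,
    lintegral_sqRatio_eq_lintegral_measure_Ioi hμ hy,
    integral_eq_lintegral_of_nonneg_ae _ hmeas.aestronglyMeasurable]
  · congr 1
    refine lintegral_congr fun v => ?_
    rw [ENNReal.ofReal_mul (tailFun_nonneg μ _), tailFun, ENNReal.ofReal_toReal (by finiteness)]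
  · exact ae_restrict_of_forall_mem measurableSet_Ioi fun v hv =>
      mul_nonneg (tailFun_nonneg μ _) (stieltjesKernel_nonneg (le_of_lt hv))

end TailAndTransform

section RegVarying

variable {f g : ℝ → ℝ} {r : ℝ}

lemma RegVarying.of_tendsto_div {c : ℝ} (hf : RegVarying f r)
    (hg : ∀ x, 0 < x → 0 < g x) (hc : c ≠ 0)
    (h : Tendsto (fun x => g x / f x) atTop (𝓝 c)) : RegVarying g r := by
  refine ⟨hg, fun t ht => ?_⟩
  have hscale : Tendsto (fun x : ℝ => t * x) atTop atTop := tendsto_id.const_mul_atTop ht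
  have hlim := ((h.comp hscale).mul (hf.2 t ht)).div h hc
  rw [mul_div_cancel_left₀ _ hc] at hlim
  refine hlim.congr' ?_
  filter_upwards [eventually_gt_atTop 0] with x hx
  have hfx := hf.1 x hx
  have hftx := hf.1 (t * x) (by positivity)
  simp only [Function.comp_apply, Pi.div_apply]
  field_simp

lemma le_rpow_mul_of_le_two_mul {γ X : ℝ} (hγ : 0 ≤ γ) (hX : 0 < X)
    (hanti : AntitoneOn f (Ici X)) (hf : ∀ x, X ≤ x → 0 ≤ f x)
    (hdouble : ∀ x, X ≤ x → f x ≤ 2 ^ γ * f (2 * x)) {u x : ℝ} (hu : X ≤ u) (hux : u ≤ x) :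
    f u ≤ 2 ^ γ * (x / u) ^ γ * f x := by
  have hu0 : 0 < u := hX.trans_le hu
  have hiter (n : ℕ) : f u ≤ (2 ^ n) ^ γ * f (2 ^ n * u) := by
    induction n with
    | zero => simp
    | succ n ih =>
      have hXn : X ≤ 2 ^ n * u := hu.trans (le_mul_of_one_le_left hu0.le (one_le_pow₀ one_le_two))
      calc f u ≤ (2 ^ n) ^ γ * f (2 ^ n * u) := ih
        _ ≤ (2 ^ n) ^ γ * (2 ^ γ * f (2 * (2 ^ n * u))) := by gcongr; exact hdouble _ hXn
        _ = (2 ^ (n + 1)) ^ γ * f (2 ^ (n + 1) * u) := by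
          rw [pow_succ, Real.mul_rpow (by positivity) two_pos.le]
          ring_nf
  obtain ⟨n, hn, hn'⟩ := exists_nat_pow_near ((one_le_div hu0).2 hux) one_lt_two
  have hx : x ≤ 2 ^ (n + 1) * u := ((div_lt_iff₀ hu0).1 hn').le
  have hfx := hf x (hu.trans hux)
  calc f u ≤ (2 ^ (n + 1)) ^ γ * f (2 ^ (n + 1) * u) := hiter (n + 1)
    _ ≤ (2 ^ (n + 1)) ^ γ * f x := by
      gcongr
      exact hanti (hu.trans hux) (hu.trans (hux.trans hx)) hx
    _ = 2 ^ γ * (2 ^ n) ^ γ * f x := by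
      rw [pow_succ', Real.mul_rpow two_pos.le (by positivity)]
    _ ≤ 2 ^ γ * (x / u) ^ γ * f x := by gcongr

lemma RegVarying.eventually_le_two_mul {γ : ℝ} (hf : RegVarying f r) (hγ : -γ < r) :
    ∀ᶠ x in atTop, f x ≤ 2 ^ γ * f (2 * x) := by
  have hlt : (2 : ℝ) ^ (-γ) < 2 ^ r := Real.rpow_lt_rpow_of_exponent_lt one_lt_two hγ
  filter_upwards [(hf.2 2 two_pos).eventually (lt_mem_nhds hlt), eventually_gt_atTop 0]
    with x hx hx0
  rw [Real.rpow_neg two_pos.le, lt_div_iff₀ (hf.1 x hx0), inv_mul_lt_iff₀ (by positivity)] at hx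
  exact hx.le

lemma RegVarying.exists_forall_div_le_rpow {γ : ℝ} (hf : RegVarying f r)
    (hanti : AntitoneOn f (Ici 0)) (hγ : -γ < r) (hγ0 : 0 ≤ γ) :
    ∃ M, 0 ≤ M ∧ ∀ᶠ x in atTop, ∀ v, 0 < v → v ≤ 1 → f (x * v) / f x ≤ M * v ^ (-γ) := by
  obtain ⟨X, hX⟩ := eventually_atTop.1
    ((hf.eventually_le_two_mul hγ).and (eventually_gt_atTop 0))
  have hX0 : 0 < X := (hX X le_rfl).2
  have hbound {u x : ℝ} (hu : X ≤ u) (hux : u ≤ x) : f u ≤ 2 ^ γ * (x / u) ^ γ * f x :=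
    le_rpow_mul_of_le_two_mul hγ0 hX0 (hanti.mono (Ici_subset_Ici.2 hX0.le))
      (fun x hx => (hf.1 x (hX x hx).2).le) (fun x hx => (hX x hx).1) hu hux
  have hfX := hf.1 X hX0
  have hf0 : f X ≤ f 0 := hanti self_mem_Ici hX0.le hX0.le
  refine ⟨f 0 / f X * 2 ^ γ, by have := hfX.trans_le hf0; positivity, ?_⟩
  filter_upwards [eventually_ge_atTop X] with x hx v hv hv1
  have hx0 : 0 < x := hX0.trans_le hx
  have hfx := hf.1 x hx0
  have hone : 1 ≤ f 0 / f X := (one_le_div hfX).2 hf0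
  rw [div_le_iff₀ hfx, Real.rpow_neg hv.le, ← Real.inv_rpow hv.le]
  rcases le_total X (x * v) with hXv | hXv
  · have hxv : x / (x * v) = v⁻¹ := by field_simp
    calc f (x * v) ≤ 1 * (2 ^ γ * v⁻¹ ^ γ * f x) := by
          rw [one_mul, ← hxv]
          exact hbound hXv (mul_le_of_le_one_right hx0.le hv1)
      _ ≤ f 0 / f X * (2 ^ γ * v⁻¹ ^ γ * f x) := by gcongr
      _ = _ := by ring
  · have hxX : x / X ≤ v⁻¹ := by
      rw [div_le_iff₀ hX0, ← div_eq_inv_mul, le_div_iff₀ hv]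
      exact hXv
    calc f (x * v) ≤ f 0 := hanti self_mem_Ici (mem_Ici.2 (by positivity)) (by positivity)
      _ = f 0 / f X * f X := (div_mul_cancel₀ _ hfX.ne').symm
      _ ≤ f 0 / f X * (2 ^ γ * (x / X) ^ γ * f x) := by gcongr; exact hbound le_rfl hx
      _ ≤ f 0 / f X * (2 ^ γ * v⁻¹ ^ γ * f x) := by gcongr
      _ = _ := by ring

section Between

variable {K : ℝ → ℝ} {a t c : ℝ}

lemma RegVarying.eventually_lt_div_of_between (hK : RegVarying K r) (ha : 0 < a)
    (hfK : ∀ y, 0 < y → f y ≤ K y) (hKf : ∀ y, 0 < y → K (y / a) ≤ f y) (ht : 0 < t)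
    (hc : c < (t / a) ^ r) : ∀ᶠ y in atTop, c < f (t * y) / f y := by
  have hpos {y : ℝ} (hy : 0 < y) : 0 < f y := (hK.1 _ (div_pos hy ha)).trans_le (hKf y hy)
  filter_upwards [(hK.2 (t / a) (div_pos ht ha)).eventually (lt_mem_nhds hc),
    eventually_gt_atTop 0] with y hy hy0
  calc c < K (t / a * y) / K y := hy
    _ = K (t * y / a) / K y := by rw [div_mul_eq_mul_div]
    _ ≤ f (t * y) / f y := div_le_div₀ (hpos (mul_pos ht hy0)).le (hKf _ (mul_pos ht hy0))
      (hpos hy0) (hfK y hy0)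

lemma RegVarying.eventually_div_lt_of_between (hK : RegVarying K r) (ha : 0 < a)
    (hfK : ∀ y, 0 < y → f y ≤ K y) (hKf : ∀ y, 0 < y → K (y / a) ≤ f y) (ht : 0 < t)
    (hc : (a * t) ^ r < c) : ∀ᶠ y in atTop, f (t * y) / f y < c := by
  have hdiv : Tendsto (fun y : ℝ => y / a) atTop atTop := tendsto_id.atTop_div_const ha
  filter_upwards [hdiv.eventually ((hK.2 (a * t) (mul_pos ha ht)).eventually (gt_mem_nhds hc)),
    eventually_gt_atTop 0] with y hy hy0
  calc f (t * y) / f y ≤ K (t * y) / K (y / a) := div_le_div₀ (hK.1 _ (mul_pos ht hy0)).le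
        (hfK _ (mul_pos ht hy0)) (hK.1 _ (div_pos hy0 ha)) (hKf y hy0)
    _ = K (a * t * (y / a)) / K (y / a) := by
      rw [mul_comm a t, mul_assoc, mul_div_cancel₀ _ ha.ne']
    _ < c := hy

lemma RegVarying.of_forall_exists_between
    (h : ∀ a, 0 < a → a < 1 → ∃ K, RegVarying K r ∧ ∀ y, 0 < y → f y ≤ K y ∧ K y ≤ f (a * y)) :
    RegVarying f r := by
  have hbetween {a : ℝ} (ha0 : 0 < a) (ha1 : a < 1) : ∃ K, RegVarying K r ∧
      (∀ y, 0 < y → f y ≤ K y) ∧ ∀ y, 0 < y → K (y / a) ≤ f y := by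
    obtain ⟨K, hK, hfK⟩ := h a ha0 ha1
    refine ⟨K, hK, fun y hy => (hfK y hy).1, fun y hy => ?_⟩
    simpa only [mul_div_cancel₀ _ ha0.ne'] using (hfK (y / a) (by positivity)).2
  have hIoo : ∀ᶠ a in 𝓝[<] (1 : ℝ), 0 < a ∧ a < 1 := Ioo_mem_nhdsLT one_pos
  refine ⟨fun x hx => ?_, fun t ht => tendsto_order.2 ⟨fun c hc => ?_, fun c hc => ?_⟩⟩
  · obtain ⟨K, hK, -, hKf⟩ := hbetween one_half_pos one_half_lt_one
    exact (hK.1 (x / (1 / 2)) (by positivity)).trans_le (hKf x hx)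
  · have hcont : ContinuousAt (fun a : ℝ => (t / a) ^ r) 1 :=
      (continuousAt_const.div continuousAt_id one_ne_zero).rpow_const
        (Or.inl (by simpa using ht.ne'))
    have hnear : ∀ᶠ a in 𝓝[<] (1 : ℝ), c < (t / a) ^ r :=
      (hcont.eventually (lt_mem_nhds (by simpa using hc))).filter_mono nhdsWithin_le_nhds
    obtain ⟨a, hca, ha0, ha1⟩ := (hnear.and hIoo).exists
    obtain ⟨K, hK, hfK, hKf⟩ := hbetween ha0 ha1
    exact hK.eventually_lt_div_of_between ha0 hfK hKf ht hca
  · have hcont : ContinuousAt (fun a : ℝ => (a * t) ^ r) 1 :=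
      (continuousAt_id.mul continuousAt_const).rpow_const (Or.inl (by simpa using ht.ne'))
    have hnear : ∀ᶠ a in 𝓝[<] (1 : ℝ), (a * t) ^ r < c :=
      (hcont.eventually (gt_mem_nhds (by simpa using hc))).filter_mono nhdsWithin_le_nhds
    obtain ⟨a, hca, ha0, ha1⟩ := (hnear.and hIoo).exists
    obtain ⟨K, hK, hfK, hKf⟩ := hbetween ha0 ha1
    exact hK.eventually_div_lt_of_between ha0 hfK hKf ht hca

end Between

end RegVarying

section Abelian

variable (μ : Measure ℝ) [IsFiniteMeasure μ]

lemma exists_forall_tailFun_div_tailFun_le {r γ : ℝ} (hF : RegVarying (tailFun μ) r)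
    (hγ : -γ < r) (hγ0 : 0 ≤ γ) :
    ∃ M, ∀ᶠ y in atTop, ∀ v, 0 < v → tailFun μ (y * v) / tailFun μ y ≤ M * v ^ (-γ) + 1 := by
  obtain ⟨M, hM0, hM⟩ :=
    hF.exists_forall_div_le_rpow ((tailFun_antitone μ).antitoneOn _) hγ hγ0
  refine ⟨M, ?_⟩
  filter_upwards [hM, eventually_gt_atTop 0] with y hy hy0 v hv
  have hpow : 0 ≤ M * v ^ (-γ) := by positivity
  rcases le_total v 1 with hv1 | hv1
  · exact (hy v hv hv1).trans (le_add_of_nonneg_right zero_le_one)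
  · have hratio : tailFun μ (y * v) / tailFun μ y ≤ 1 :=
      (div_le_one (hF.1 y hy0)).2 (tailFun_antitone μ (le_mul_of_one_le_right hy0.le hv1))
    linarith

theorem tendsto_stieltjesFun_div_tailFun (hμ : μ (Iio 0) = 0) {α : ℝ} (hα0 : 0 ≤ α) (hα2 : α < 2)
    (hF : RegVarying (tailFun μ) (-α)) :
    Tendsto (fun y => stieltjesFun μ y / tailFun μ y) atTop
      (𝓝 (ProbabilityTheory.beta (1 - α / 2) (1 + α / 2))) := by
  obtain ⟨γ, hαγ, hγ2⟩ := exists_between hα2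
  have hγ0 : 0 ≤ γ := hα0.trans hαγ.le
  obtain ⟨M, hM⟩ := exists_forall_tailFun_div_tailFun_le μ hF (neg_lt_neg hαγ) hγ0
  have hlim : Tendsto (fun y => ∫ v in Ioi (0 : ℝ),
      tailFun μ (y * v) / tailFun μ y * stieltjesKernel v) atTop
      (𝓝 (∫ v in Ioi (0 : ℝ), v ^ (-α) * stieltjesKernel v)) := by
    refine tendsto_integral_filter_of_dominated_convergence
      (fun v => M * (v ^ (-γ) * stieltjesKernel v) + v ^ (-(0 : ℝ)) * stieltjesKernel v)
      (Eventually.of_forall fun y => ?_) ?_ ?_ ?_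
    · have htail := (tailFun_antitone μ).measurable
      have hkernel := continuous_stieltjesKernel.measurable
      exact Measurable.aestronglyMeasurable (by fun_prop)
    · filter_upwards [hM] with y hy
      refine ae_restrict_of_forall_mem measurableSet_Ioi fun v (hv : 0 < v) => ?_
      have hkernel := stieltjesKernel_nonneg hv.le
      rw [Real.norm_of_nonneg (mul_nonneg (div_nonneg (tailFun_nonneg μ _) (tailFun_nonneg μ _))
        hkernel), neg_zero, Real.rpow_zero, ← mul_assoc, ← add_mul]
      exact mul_le_mul_of_nonneg_right (hy v hv) hkernel
    · exact ((integrableOn_rpow_neg_mul_stieltjesKernel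
        (abs_lt.2 ⟨by linarith, hγ2⟩)).const_mul M).add
        (integrableOn_rpow_neg_mul_stieltjesKernel (by norm_num))
    · refine ae_restrict_of_forall_mem measurableSet_Ioi fun v (hv : 0 < v) => ?_
      simpa only [mul_comm v] using (hF.2 v hv).mul_const (stieltjesKernel v)
  rw [← integral_rpow_neg_mul_stieltjesKernel (abs_lt.2 ⟨by linarith, hα2⟩)]
  refine hlim.congr' ?_
  filter_upwards [eventually_gt_atTop 0] with y hy
  simp only [stieltjesFun_eq_integral_tailFun μ hμ hy, ← integral_div, div_mul_eq_mul_div]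

end Abelian

section Density

variable {𝕜 ι E F : Type*} [NontriviallyNormedField 𝕜]

/-- The vectors at which a family of operators converges pointwise along a filter. -/
def convergenceSubmodule [NormedAddCommGroup E] [NormedSpace 𝕜 E] [NormedAddCommGroup F]
    [NormedSpace 𝕜 F] (Φ : ι → E →L[𝕜] F) (l : Filter ι) : Submodule 𝕜 E where
  carrier := {x | ∃ a, Tendsto (fun i => Φ i x) l (𝓝 a)}
  add_mem' := fun ⟨a, ha⟩ ⟨b, hb⟩ => ⟨a + b, by simpa only [map_add] using ha.add hb⟩
  zero_mem' := ⟨0, by simpa only [map_zero] using tendsto_const_nhds⟩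
  smul_mem' := fun c _ ⟨a, ha⟩ => ⟨c • a, by simpa only [map_smul] using ha.const_smul c⟩

lemma isClosed_convergenceSubmodule [NormedAddCommGroup E] [NormedSpace 𝕜 E]
    [NormedAddCommGroup F] [NormedSpace 𝕜 F] [CompleteSpace F] {Φ : ι → E →L[𝕜] F}
    {l : Filter ι} [l.NeBot] {C : ℝ} (hΦ : ∀ i, ‖Φ i‖ ≤ C) :
    IsClosed (convergenceSubmodule Φ l : Set E) := by
  have hcauchy : (convergenceSubmodule Φ l : Set E) =
      {x | Tendsto (fun p : ι × ι => (Φ p.1 - Φ p.2) x) (l ×ˢ l) (𝓝 0)} := by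
    ext x
    change (∃ a, Tendsto (fun i => Φ i x) l (𝓝 a)) ↔ _
    rw [← cauchy_map_iff_exists_tendsto, cauchy_map_iff', uniformity_eq_comap_nhds_zero_swapped,
      tendsto_comap_iff]
    rfl
  have hbound : ∃ C', ∀ p : ι × ι, ‖Φ p.1 - Φ p.2‖ ≤ C' :=
    ⟨C + C, fun p => (norm_sub_le _ _).trans (add_le_add (hΦ _) (hΦ _))⟩
  have hequi : Equicontinuous fun p : ι × ι => ⇑(Φ p.1 - Φ p.2) :=
    ((NormedSpace.equicontinuous_TFAE fun p : ι × ι => Φ p.1 - Φ p.2).out 5 1).1 hbound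
  rw [hcauchy]
  exact hequi.isClosed_setOfPred_tendsto continuous_const

lemma pow_mem_of_inverse_one_sub_smul_mem {A : Type*} [NormedRing A] [NormedAlgebra 𝕜 A]
    [HasSummableGeomSeries A] {S : Submodule 𝕜 A} (hS : IsClosed (S : Set A)) {a : A}
    (ha : ∀ᶠ θ in 𝓝[≠] (0 : 𝕜), Ring.inverse (1 - θ • a) ∈ S) (k : ℕ) : a ^ k ∈ S := by
  induction k using Nat.strong_induction_on with
  | _ k ih =>
    have hline : Tendsto (fun θ : 𝕜 => 1 - θ • a) (𝓝[≠] 0) (𝓝 1) := by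
      have hcont : Continuous fun θ : 𝕜 => 1 - θ • a := by fun_prop
      simpa using (hcont.tendsto 0).mono_left nhdsWithin_le_nhds
    have hinv : Tendsto (fun θ : 𝕜 => a ^ k * Ring.inverse (1 - θ • a)) (𝓝[≠] 0) (𝓝 (a ^ k)) := by
      have h1 : Tendsto Ring.inverse (𝓝 (1 : A)) (𝓝 1) := by
        simpa [ContinuousAt] using NormedRing.inverse_continuousAt (1 : Aˣ)
      simpa using (h1.comp hline).const_mul (a ^ k)
    refine hS.mem_of_tendsto hinv ?_
    filter_upwards [ha, hline.eventually (Units.nhds 1), self_mem_nhdsWithin] with θ hθ hunit hθ0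
    have hexpand : a ^ k * Ring.inverse (1 - θ • a) =
        (θ ^ k)⁻¹ • (Ring.inverse (1 - θ • a) - ∑ j ∈ Finset.range k, θ ^ j • a ^ j) := by
      have hgeom : ∑ j ∈ Finset.range k, θ ^ j • a ^ j =
          (1 - θ ^ k • a ^ k) * Ring.inverse (1 - θ • a) := by
        simp only [← smul_pow]
        rw [← geom_sum_mul_neg, mul_assoc, Ring.mul_inverse_cancel _ hunit, mul_one]
      rw [hgeom, sub_mul, one_mul, sub_sub_cancel, smul_mul_assoc,
        inv_smul_smul₀ (pow_ne_zero k hθ0)]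
    rw [SetLike.mem_coe, hexpand]
    exact S.smul_mem _ (S.sub_mem hθ (S.sum_mem fun j hj =>
      S.smul_mem _ (ih j (Finset.mem_range.1 hj))))

lemma eq_top_of_forall_pow_mem {a b : ℝ} {S : Submodule ℝ C(Icc a b, ℝ)}
    (hS : IsClosed (S : Set C(Icc a b, ℝ)))
    (hpow : ∀ k : ℕ, coordFun (Icc a b) ^ k ∈ S) :
    S = ⊤ := by
  have hpoly : Subalgebra.toSubmodule (polynomialFunctions (Icc a b)) ≤ S := by
    rw [polynomialFunctions.eq_adjoin_X, Algebra.adjoin_eq_span, Submodule.span_le]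
    intro g hg
    obtain ⟨k, rfl⟩ := Submonoid.mem_closure_singleton.1 hg
    convert! hpow k
    ext x
    simp
  have hdense := polynomialFunctions_closure_eq_top a b
  refine top_unique fun h _ => closure_minimal hpoly hS ?_
  have hmem : h ∈ (polynomialFunctions (Icc a b)).topologicalClosure := hdense ▸ Algebra.mem_top
  exact hmem

lemma one_sub_mul_pos {θ : ℝ} (hθ : θ < 1) (x : Icc (0 : ℝ) 1) : 0 < 1 - θ * x := by
  have hconvex : 1 - θ * x = (1 - x) + (1 - θ) * x := by ring
  rcases x.2.2.lt_or_eq with hx | hx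
  · exact hconvex ▸ add_pos_of_pos_of_nonneg (sub_pos.2 hx) (mul_nonneg (sub_pos.2 hθ).le x.2.1)
  · simpa [hx] using hθ

lemma inverse_one_sub_smul_coordFun_apply {θ : ℝ} (hθ : θ < 1) (x : Icc (0 : ℝ) 1) :
    Ring.inverse (1 - θ • coordFun (Icc (0 : ℝ) 1)) x =
      (1 - θ * x)⁻¹ := by
  set p : C(Icc (0 : ℝ) 1, ℝ) := 1 - θ • coordFun (Icc (0 : ℝ) 1) with hp
  have hunit : IsUnit p := (ContinuousMap.isUnit_iff_forall_ne_zero p).2 fun z =>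
    (one_sub_mul_pos hθ z).ne'
  refine eq_inv_of_mul_eq_one_left ?_
  simpa [hp] using DFunLike.congr_fun (Ring.inverse_mul_cancel p hunit) x

end Density

section Tauberian

variable (μ : Measure ℝ) [IsFiniteMeasure μ]

lemma norm_integral_mul_sqRatio_div_le (y : ℝ) (h : C(Icc (0 : ℝ) 1, ℝ)) :
    ‖(∫ t, h (sqRatio y t) * sqRatio y t ∂μ) / stieltjesFun μ y‖ ≤ ‖h‖ := by
  rw [norm_div, Real.norm_of_nonneg (stieltjesFun_nonneg μ y)]
  refine div_le_of_le_mul₀ (stieltjesFun_nonneg μ y) (norm_nonneg h) ?_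
  rw [stieltjesFun, ← integral_const_mul]
  refine norm_integral_le_of_norm_le ((integrable_sqRatio μ y).const_mul _)
    (Eventually.of_forall fun t => ?_)
  rw [norm_mul, Real.norm_of_nonneg (sqRatio y t).2.1]
  exact mul_le_mul_of_nonneg_right (h.norm_coe_le_norm _) (sqRatio y t).2.1

/-- The mean of `h` for the probability measure proportional to `x = t² / (t² + y²)` times `μ`,
as a functional of `h ∈ C([0,1])` evaluated at `x`. It is `0` if the transform of `μ` vanishes
at `y`. -/
def weightedMean (y : ℝ) : C(Icc (0 : ℝ) 1, ℝ) →L[ℝ] ℝ :=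
  have hint := (integrable_mul_sqRatio μ · y)
  LinearMap.mkContinuous
    { toFun h := (∫ t, h (sqRatio y t) * sqRatio y t ∂μ) / stieltjesFun μ y
      map_add' f g := by
        simp only [ContinuousMap.add_apply, add_mul, integral_add (hint f) (hint g), add_div]
      map_smul' c f := by
        simp only [ContinuousMap.smul_apply, smul_eq_mul, mul_assoc, RingHom.id_apply,
          integral_const_mul, mul_div_assoc] }
    1 fun h => (norm_integral_mul_sqRatio_div_le μ y h).trans_eq (one_mul _).symm

lemma weightedMean_apply (y : ℝ) (h : C(Icc (0 : ℝ) 1, ℝ)) :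
    weightedMean μ y h = (∫ t, h (sqRatio y t) * sqRatio y t ∂μ) / stieltjesFun μ y := rfl

lemma norm_weightedMean_le (y : ℝ) : ‖weightedMean μ y‖ ≤ 1 :=
  ContinuousLinearMap.opNorm_le_bound _ zero_le_one fun h =>
    (norm_integral_mul_sqRatio_div_le μ y h).trans_eq (one_mul _).symm

lemma weightedMean_inverse_one_sub_smul_coordFun {θ y : ℝ} (hθ : θ < 1) (hy : 0 < y) :
    weightedMean μ y (Ring.inverse (1 - θ • coordFun (Icc (0 : ℝ) 1))) =
      (1 - θ)⁻¹ * (stieltjesFun μ ((√(1 - θ))⁻¹ * y) / stieltjesFun μ y) := by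
  rw [weightedMean_apply, ← mul_div_assoc]
  congr 1
  rw [stieltjesFun, ← integral_const_mul]
  congr 1 with t
  have hθ' : 1 - θ ≠ 0 := (sub_pos.2 hθ).ne'
  have hx := (one_sub_mul_pos hθ (sqRatio y t)).ne'
  rw [inverse_one_sub_smul_coordFun_apply hθ, inv_mul_eq_div, inv_mul_eq_div, div_eq_div_iff hx hθ',
    mul_comm _ (1 - θ), mul_comm _ (1 - θ * _), one_sub_mul_sqRatio_mul_sqRatio hθ hy]

lemma exists_tendsto_weightedMean {r : ℝ} (hG : RegVarying (stieltjesFun μ) r)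
    (h : C(Icc (0 : ℝ) 1, ℝ)) :
    ∃ c, Tendsto (fun y => weightedMean μ y h) atTop (𝓝 c) := by
  have hclosed : IsClosed (convergenceSubmodule (weightedMean μ) atTop : Set C(Icc (0 : ℝ) 1, ℝ)) :=
    isClosed_convergenceSubmodule (norm_weightedMean_le μ)
  have hresolvent {θ : ℝ} (hθ : θ < 1) :
      Ring.inverse (1 - θ • coordFun (Icc (0 : ℝ) 1)) ∈
        convergenceSubmodule (weightedMean μ) atTop := by
    refine ⟨_, ((hG.2 (√(1 - θ))⁻¹ (by simpa using hθ)).const_mul (1 - θ)⁻¹).congr' ?_⟩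
    filter_upwards [eventually_gt_atTop 0] with y hy
    exact (weightedMean_inverse_one_sub_smul_coordFun μ hθ hy).symm
  have htop := eq_top_of_forall_pow_mem hclosed (pow_mem_of_inverse_one_sub_smul_mem hclosed
    (nhdsWithin_le_nhds ((eventually_lt_nhds one_pos).mono fun θ hθ => hresolvent hθ)))
  have hmem : h ∈ convergenceSubmodule (weightedMean μ) atTop := htop ▸ Submodule.mem_top
  exact hmem

variable {μ}

lemma stieltjesFun_two_mul_le (hμ : μ (Iio 0) = 0) (s : ℝ) {y : ℝ} (hy : 0 < y) :
    stieltjesFun μ (2 * y) ≤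
      tailFun μ (s * y) + (s ^ 2 + 1) / (s ^ 2 + 4) * stieltjesFun μ y := by
  rw [← integral_indicator_Ioi_eq_tailFun, stieltjesFun, stieltjesFun, ← integral_const_mul,
    ← integral_add (integrable_indicator_Ioi μ _) ((integrable_sqRatio μ y).const_mul _)]
  refine integral_mono_ae (integrable_sqRatio μ _)
    ((integrable_indicator_Ioi μ _).add ((integrable_sqRatio μ y).const_mul _)) ?_
  filter_upwards [ae_nonneg_of_measure_Iio_eq_zero hμ] with t ht
  by_cases hts : t ∈ Ioi (s * y)
  · rw [indicator_of_mem hts, Pi.one_apply]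
    exact (sqRatio _ t).2.2.trans
      (le_add_of_nonneg_right (mul_nonneg (by positivity) (sqRatio y t).2.1))
  · have hsq : t ^ 2 ≤ s ^ 2 * y ^ 2 := by
      rw [← mul_pow]
      exact pow_le_pow_left₀ ht (not_lt.1 hts) 2
    rw [indicator_of_notMem hts, zero_add, coe_sqRatio, coe_sqRatio, div_mul_div_comm,
      div_le_div_iff₀ (by positivity) (by positivity)]
    nlinarith [mul_nonneg (sq_nonneg t) (sub_nonneg.2 hsq)]

lemma exists_forall_mul_stieltjesFun_le_tailFun (hμ : μ (Iio 0) = 0) {r : ℝ} (hr : -2 < r)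
    (hG : RegVarying (stieltjesFun μ) r) :
    ∃ δ, 0 < δ ∧ ∀ᶠ y in atTop, δ * stieltjesFun μ y ≤ tailFun μ y := by
  obtain ⟨s, hsr, hs⟩ : ∃ s : ℝ, (s ^ 2 + 1) / (s ^ 2 + 4) < 2 ^ r ∧ 0 < s := by
    have hcont : ContinuousAt (fun s : ℝ => (s ^ 2 + 1) / (s ^ 2 + 4)) 0 :=
      ContinuousAt.div (by fun_prop) (by fun_prop) (by norm_num)
    have hquarter : (0 ^ 2 + 1) / (0 ^ 2 + 4) < (2 : ℝ) ^ r := by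
      have := Real.rpow_lt_rpow_of_exponent_lt one_lt_two hr
      rw [Real.rpow_neg two_pos.le, Real.rpow_two] at this
      norm_num at this ⊢
      exact this
    exact (((hcont.eventually (gt_mem_nhds hquarter)).filter_mono nhdsWithin_le_nhds).and
      (self_mem_nhdsWithin (s := Ioi 0))).exists
  set q : ℝ := (s ^ 2 + 1) / (s ^ 2 + 4)
  have hlim := (hG.2 (2 * s⁻¹) (by positivity)).sub ((hG.2 s⁻¹ (by positivity)).const_mul q)
  have hL : 0 < (2 * s⁻¹) ^ r - q * s⁻¹ ^ r := by
    rw [Real.mul_rpow two_pos.le (by positivity), ← sub_mul]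
    exact mul_pos (sub_pos.2 hsr) (by positivity)
  obtain ⟨δ, hδ0, hδ⟩ := exists_between hL
  refine ⟨δ, hδ0, ?_⟩
  filter_upwards [hlim.eventually (lt_mem_nhds hδ), eventually_gt_atTop 0] with y hy hy0
  have hle := stieltjesFun_two_mul_le hμ s (mul_pos (inv_pos.2 hs) hy0)
  rw [mul_inv_cancel_left₀ hs.ne', ← mul_assoc] at hle
  rw [← mul_div_assoc, ← sub_div, lt_div_iff₀ (hG.1 y hy0)] at hy
  linarith

lemma exists_indicator_le_mul_le_indicator {c d : ℝ} (hc : 0 < c) (hcd : c < d) :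
    ∃ h : C(Icc (0 : ℝ) 1, ℝ), ∀ x : Icc (0 : ℝ) 1,
      (Ioi d).indicator 1 (x : ℝ) ≤ h x * x ∧ h x * x ≤ (Ioi c).indicator 1 (x : ℝ) := by
  obtain ⟨φ, hφ0, hφ1, hφ⟩ := exists_continuous_zero_one_of_isClosed
    (isClosed_Iic (a := c)) (isClosed_Ici (a := d)) (Iic_disjoint_Ici.2 hcd.not_ge)
  refine ⟨⟨fun x => φ x / max (x : ℝ) c, Continuous.div (by fun_prop) (by fun_prop)
    fun x => (lt_max_of_lt_right hc).ne'⟩, fun x => ?_⟩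
  simp only [ContinuousMap.coe_mk]
  rcases le_or_gt (x : ℝ) c with hxc | hxc
  · simp [hφ0 hxc, indicator_of_notMem (notMem_Ioi.2 hxc),
      indicator_of_notMem (notMem_Ioi.2 (hxc.trans hcd.le))]
  · rw [max_eq_left hxc.le, div_mul_cancel₀ _ (hc.trans hxc).ne',
      indicator_of_mem (mem_Ioi.2 hxc)]
    refine ⟨indicator_apply_le' (fun hxd => ?_) (fun _ => (hφ x).1), (hφ x).2⟩
    exact (hφ1 (mem_Ici.2 (le_of_lt hxd))).ge

lemma indicator_Ioi_sqRatio {a y t : ℝ} (ha : 0 ≤ a) (hy : 0 < y) (ht : 0 ≤ t) :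
    (Ioi (a ^ 2 / (a ^ 2 + 1))).indicator (1 : ℝ → ℝ) (sqRatio y t) =
      (Ioi (a * y)).indicator 1 t := by
  simp only [indicator_apply, mem_Ioi, sq_div_sq_add_one_lt_sqRatio_iff ha hy ht, Pi.one_apply]

lemma exists_forall_tailFun_le_integral_le_tailFun (hμ : μ (Iio 0) = 0) {a b : ℝ} (ha : 0 < a)
    (hab : a < b) : ∃ h : C(Icc (0 : ℝ) 1, ℝ), ∀ y, 0 < y →
      tailFun μ (b * y) ≤ ∫ t, h (sqRatio y t) * sqRatio y t ∂μ ∧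
        ∫ t, h (sqRatio y t) * sqRatio y t ∂μ ≤ tailFun μ (a * y) := by
  have hb : 0 < b := ha.trans hab
  have hcd : a ^ 2 / (a ^ 2 + 1) < b ^ 2 / (b ^ 2 + 1) := by
    rw [div_lt_div_iff₀ (by positivity) (by positivity)]
    linarith [pow_lt_pow_left₀ hab ha.le two_ne_zero]
  obtain ⟨h, hh⟩ := exists_indicator_le_mul_le_indicator (by positivity) hcd
  refine ⟨h, fun y hy => ?_⟩
  rw [← integral_indicator_Ioi_eq_tailFun, ← integral_indicator_Ioi_eq_tailFun]
  have hnonneg := ae_nonneg_of_measure_Iio_eq_zero hμ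
  constructor
  · refine integral_mono_ae (integrable_indicator_Ioi μ _) (integrable_mul_sqRatio μ h y) ?_
    filter_upwards [hnonneg] with t ht
    simpa only [indicator_Ioi_sqRatio hb.le hy ht] using (hh (sqRatio y t)).1
  · refine integral_mono_ae (integrable_mul_sqRatio μ h y) (integrable_indicator_Ioi μ _) ?_
    filter_upwards [hnonneg] with t ht
    simpa only [indicator_Ioi_sqRatio ha.le hy ht] using (hh (sqRatio y t)).2

lemma tailFun_pos_of_regVarying_stieltjesFun (hμ : μ (Iio 0) = 0) {r : ℝ} (hr : -2 < r)
    (hG : RegVarying (stieltjesFun μ) r) (y : ℝ) : 0 < tailFun μ y := by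
  obtain ⟨δ, hδ, hle⟩ := exists_forall_mul_stieltjesFun_le_tailFun hμ hr hG
  obtain ⟨z, hz, hyz, hz0⟩ :=
    (hle.and ((eventually_ge_atTop y).and (eventually_gt_atTop 0))).exists
  exact ((mul_pos hδ (hG.1 z hz0)).trans_le hz).trans_le (tailFun_antitone μ hyz)

lemma exists_regVarying_tailFun_between (hμ : μ (Iio 0) = 0) {r : ℝ} (hr : -2 < r)
    (hG : RegVarying (stieltjesFun μ) r) {a : ℝ} (ha0 : 0 < a) (ha1 : a < 1) :
    ∃ K, RegVarying K r ∧ ∀ y, 0 < y → tailFun μ y ≤ K y ∧ K y ≤ tailFun μ (a * y) := by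
  obtain ⟨h, hh⟩ := exists_forall_tailFun_le_integral_le_tailFun hμ ha0 ha1
  simp only [one_mul] at hh
  obtain ⟨c, hc⟩ := exists_tendsto_weightedMean μ hG h
  obtain ⟨δ, hδ, hle⟩ := exists_forall_mul_stieltjesFun_le_tailFun hμ hr hG
  have hδc : δ ≤ c := ge_of_tendsto hc <| by
    filter_upwards [hle, eventually_gt_atTop 0] with y hy hy0
    rw [weightedMean_apply, le_div_iff₀ (hG.1 y hy0)]
    exact hy.trans (hh y hy0).1
  refine ⟨fun y => ∫ t, h (sqRatio y t) * sqRatio y t ∂μ,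
    hG.of_tendsto_div (fun y hy => ?_) (hδ.trans_le hδc).ne' hc, hh⟩
  exact (tailFun_pos_of_regVarying_stieltjesFun hμ hr hG y).trans_le (hh y hy).1

theorem regVarying_tailFun_of_stieltjesFun (hμ : μ (Iio 0) = 0) {r : ℝ} (hr : -2 < r)
    (hG : RegVarying (stieltjesFun μ) r) : RegVarying (tailFun μ) r :=
  RegVarying.of_forall_exists_between fun _ => exists_regVarying_tailFun_between hμ hr hG

end Tauberian

/-- Proposition (Karamata-type, Stieltjes variant): for a finite positive Borel measure
`ρ` on `[0,∞)` and `α ∈ [0,2)`, the tail `y ↦ ρ((y,∞))` is regularly varying of index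
`-α` iff `y ↦ ∫₀^∞ t²/(t²+y²) dρ(t)` is regularly varying of index `-α`; and in that case
`∫₀^∞ t²/(t²+y²) dρ(t) ~ c_α·ρ((y,∞))` as `y → ∞`, where
`c_α = (πα/2)/sin(πα/2)` for `α ∈ (0,2)` and `c₀ = 1`. -/
theorem stmt14 (ρm : Measure ℝ) [IsFiniteMeasure ρm] (hsupp : ρm (Set.Iio 0) = 0)
    (α : ℝ) (hα0 : 0 ≤ α) (hα2 : α < 2) :
    (RegVarying (fun y : ℝ => (ρm (Set.Ioi y)).toReal) (-α) ↔
      RegVarying (fun y : ℝ => ∫ t : ℝ, t ^ 2 / (t ^ 2 + y ^ 2) ∂ρm) (-α)) ∧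
    (RegVarying (fun y : ℝ => (ρm (Set.Ioi y)).toReal) (-α) →
      Tendsto (fun y : ℝ =>
          (∫ t : ℝ, t ^ 2 / (t ^ 2 + y ^ 2) ∂ρm) /
            ((if α = 0 then 1 else (Real.pi * α / 2) / Real.sin (Real.pi * α / 2)) *
              (ρm (Set.Ioi y)).toReal))
        atTop (nhds 1)) := by
  have hc : 0 < ProbabilityTheory.beta (1 - α / 2) (1 + α / 2) :=
    ProbabilityTheory.beta_pos (by linarith) (by linarith)
  have hlim := tendsto_stieltjesFun_div_tailFun ρm hsupp hα0 hα2
  rw [← beta_one_sub_half_one_add_half]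
  refine ⟨⟨fun hF => ?_, regVarying_tailFun_of_stieltjesFun hsupp (by linarith)⟩, fun hF => ?_⟩
  · have hF0 : 0 < tailFun ρm 0 := (hF.1 1 one_pos).trans_le (tailFun_antitone ρm zero_le_one)
    exact hF.of_tendsto_div (fun x _ => stieltjesFun_pos ρm hF0 x) hc.ne' (hlim hF)
  · have hratio := (hlim hF).div_const (ProbabilityTheory.beta (1 - α / 2) (1 + α / 2))
    rw [div_self hc.ne'] at hratio
    refine hratio.congr fun y => ?_
    rw [div_div, mul_comm]
    rfl
end
end
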